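/- Let n be a positive integer divisible by 4. Then the complex dimension of the diagonal coinvariant ring R_W of the Weyl group W(B_n) satisfies dim_ℂ R_W ≥ (2n+1)^n + n(n-4)/4. -/

import Mathlib

open MvPolynomial

/-- The action of the signed permutation `(ε, σ) ∈ W(Bₙ)` on the polynomial ring
`ℂ[x₁,…,xₙ,y₁,…,yₙ]`, sending `xᵢ ↦ εᵢ x_{σ(i)}` and `yᵢ ↦ εᵢ y_{σ(i)}`. -/
noncomputable def bAct (n : ℕ) (ε : Fin n → ℤˣ) (σ : Equiv.Perm (Fin n)) :
    MvPolynomial (Fin n ⊕ Fin n) ℂ →ₐ[ℂ] MvPolynomial (Fin n ⊕ Fin n) ℂ :=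
  aeval (Sum.elim
    (fun i => (((ε i : ℤ) : ℂ)) • X (Sum.inl (σ i)))
    (fun i => (((ε i : ℤ) : ℂ)) • X (Sum.inr (σ i))))

/-- The ideal `I_W` generated by the `W(Bₙ)`-invariant polynomials of positive degree
(equivalently, by the invariant polynomials with zero constant term). -/
noncomputable def diagIdeal (n : ℕ) : Ideal (MvPolynomial (Fin n ⊕ Fin n) ℂ) :=
  Ideal.span {f | (∀ ε σ, bAct n ε σ f = f) ∧ constantCoeff f = 0}

/-! ### The operators on the tensor power module -/

/-- Exponent of `x_i`/`y_i` bundled. -/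
noncomputable def ww (n : ℕ) (j : ℕ) : ℂ := if j % 2 = 0 then (j : ℂ) else (j : ℂ) - (2 * n + 1)

/-- matrix entry of `X^a Y^b` from `l` to `k`. -/
noncomputable def mm (n a b k l : ℕ) : ℂ :=
  if k + b = l + a ∧ b ≤ l then ∏ t ∈ Finset.range b, ww n (l - t) else 0

lemma ww_zero (n : ℕ) : ww n 0 = 0 := by simp [ww]

lemma ww_top (n : ℕ) : ww n (2 * n + 1) = 0 := by
  have : (2 * n + 1) % 2 ≠ 0 := by omega
  simp [ww]

lemma ww_ne_zero (n j : ℕ) (h1 : 0 < j) (h2 : j ≤ 2 * n) : ww n j ≠ 0 := by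
  unfold ww
  split_ifs with h
  · exact_mod_cast h1.ne'
  · intro h0
    have : (j : ℂ) = ((2 * n + 1 : ℕ) : ℂ) := by push_cast; linear_combination h0
    have := Nat.cast_injective this
    omega

lemma mm_x (n a b k l : ℕ) : mm n (a + 1) b k l = if k = 0 then 0 else mm n a b (k - 1) l := by
  unfold mm
  rcases k with _ | k
  · rw [if_neg, if_pos rfl]; omega
  · rw [if_neg (by omega : ¬ k + 1 = 0)]
    congr 1
    apply propext
    constructor <;> rintro ⟨h1, h2⟩ <;> refine ⟨?_, h2⟩ <;> omega

/-- lower order coefficient -/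
noncomputable def dd (n a b : ℕ) : ℂ :=
  if a % 2 = 0 then (a : ℂ) else if b % 2 = 0 then (a : ℂ) + (2 * n + 1) else (a : ℂ) - (2 * n + 1)

lemma mm_y (n a b k l : ℕ) (hl : l % 2 = 1) :
    ww n (k + 1) * mm n a b (k + 1) l = mm n a (b + 1) k l + dd n a b * mm n (a - 1) b k l := by
  rcases a with _ | a
  · have hd : dd n 0 b = 0 := by simp [dd]
    rw [hd, zero_mul, add_zero]
    unfold mm
    by_cases h : k + 1 + b = l + 0 ∧ b ≤ l
    · rw [if_pos h, if_pos ⟨by omega, by omega⟩, Finset.prod_range_succ,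
        show l - b = k + 1 by omega, mul_comm]
    · rw [if_neg h, if_neg, mul_zero]
      rintro ⟨h1, h2⟩; apply h; omega
  · simp only [Nat.add_sub_cancel]
    by_cases h : k + 1 + b = l + (a + 1) ∧ b ≤ l
    · have e1 : mm n (a + 1) b (k + 1) l = ∏ t ∈ Finset.range b, ww n (l - t) := by
        unfold mm; rw [if_pos h]
      have e2 : mm n a b k l = ∏ t ∈ Finset.range b, ww n (l - t) := by
        unfold mm; rw [if_pos ⟨by omega, by omega⟩]
      have e3 : mm n (a + 1) (b + 1) k l
          = (∏ t ∈ Finset.range b, ww n (l - t)) * ww n (l - b) := by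
        unfold mm
        by_cases hb : b + 1 ≤ l
        · rw [if_pos ⟨by omega, hb⟩, Finset.prod_range_succ]
        · rw [if_neg (by tauto), show l - b = 0 by omega, ww_zero, mul_zero]
      rw [e1, e2, e3]
      have : ww n (k + 1) = ww n (l - b) + dd n (a + 1) b := by
        have hk : k + 1 = (l - b) + (a + 1) := by omega
        rw [hk]
        unfold ww dd
        have hp : (l - b) % 2 = (1 + b) % 2 := by omega
        rcases Nat.mod_two_eq_zero_or_one a with ha | ha <;>
          rcases Nat.mod_two_eq_zero_or_one b with hb | hb
        · rw [if_pos (by omega), if_neg (by omega), if_neg (by omega), if_pos (by omega)]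
          push_cast; ring
        · rw [if_neg (by omega), if_pos (by omega), if_neg (by omega), if_neg (by omega)]
          push_cast; ring
        · rw [if_neg (by omega), if_neg (by omega), if_pos (by omega)]
          push_cast; ring
        · rw [if_pos (by omega), if_pos (by omega), if_pos (by omega)]
          push_cast; ring
      rw [this]; ring
    · have e1 : mm n (a + 1) b (k + 1) l = 0 := by unfold mm; rw [if_neg h]
      have e2 : mm n a b k l = 0 := by
        unfold mm; rw [if_neg]; rintro ⟨h1, h2⟩; apply h; omega
      have e3 : mm n (a + 1) (b + 1) k l = 0 := by
        unfold mm; rw [if_neg]; rintro ⟨h1, h2⟩; apply h; omega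
      rw [e1, e2, e3]; simp

abbrev RR (n : ℕ) := MvPolynomial (Fin n ⊕ Fin n) ℂ
abbrev LL (n : ℕ) := (Fin n → Fin (2 * n + 1)) → ℂ

noncomputable def tmat (n : ℕ) (s : Fin n ⊕ Fin n →₀ ℕ) (k : Fin n → Fin (2 * n + 1)) :
    Matrix (Fin n) (Fin n) ℂ :=
  Matrix.of fun i j => mm n (s (Sum.inl i)) (s (Sum.inr i)) (k i) (2 * j + 1)

noncomputable def tt (n : ℕ) (s : Fin n ⊕ Fin n →₀ ℕ) : LL n := fun k => (tmat n s k).det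

noncomputable def TT (n : ℕ) : RR n →ₗ[ℂ] LL n :=
  (basisMonomials (Fin n ⊕ Fin n) ℂ).constr ℂ (tt n)

lemma TT_monomial_one (n : ℕ) (s) : TT n (monomial s 1) = tt n s := by
  have := (basisMonomials (Fin n ⊕ Fin n) ℂ).constr_basis ℂ (tt n) s
  simpa [TT] using this

lemma TT_monomial (n : ℕ) (s) (c : ℂ) : TT n (monomial s c) = c • tt n s := by
  rw [← TT_monomial_one, ← map_smul, smul_monomial, smul_eq_mul, mul_one]

noncomputable def opX (n : ℕ) (i : Fin n) : LL n →ₗ[ℂ] LL n where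
  toFun F := fun k => if h : (k i : ℕ) = 0 then 0 else
    F (Function.update k i ⟨(k i : ℕ) - 1, by have := (k i).2; omega⟩)
  map_add' F G := by ext k; simp only [Pi.add_apply]; split_ifs <;> simp
  map_smul' c F := by ext k; simp only [Pi.smul_apply, RingHom.id_apply]; split_ifs <;> simp

noncomputable def opY (n : ℕ) (i : Fin n) : LL n →ₗ[ℂ] LL n where
  toFun F := fun k => if h : (k i : ℕ) + 1 < 2 * n + 1 then
    ww n ((k i : ℕ) + 1) * F (Function.update k i ⟨(k i : ℕ) + 1, h⟩) else 0
  map_add' F G := by ext k; simp only [Pi.add_apply]; split_ifs <;> simp [mul_add]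
  map_smul' c F := by
    ext k; simp only [Pi.smul_apply, RingHom.id_apply]; split_ifs <;> simp; ring

/-- expand the determinant, isolating the row `i` -/
lemma tt_expand (n : ℕ) (s) (k) (i : Fin n) : tt n s k = ∑ σ : Equiv.Perm (Fin n),
    ((Equiv.Perm.sign σ : ℤ) : ℂ) * (mm n (s (Sum.inl i)) (s (Sum.inr i)) (k i) (2 * (σ i : ℕ) + 1) *
      ∏ j ∈ Finset.univ.erase i, mm n (s (Sum.inl j)) (s (Sum.inr j)) (k j) (2 * (σ j : ℕ) + 1)) := by
  unfold tt
  rw [← Matrix.det_transpose, Matrix.det_apply']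
  refine Finset.sum_congr rfl fun σ _ => ?_
  rw [Finset.mul_prod_erase _ (fun j => mm n (s (Sum.inl j)) (s (Sum.inr j)) (k j) (2 * (σ j : ℕ) + 1)) (Finset.mem_univ i)]
  rfl

lemma opX_tt (n : ℕ) (i : Fin n) (s) :
    opX n i (tt n s) = tt n (s + Finsupp.single (Sum.inl i) 1) := by
  ext k
  rw [tt_expand n _ k i]
  simp only [opX, LinearMap.coe_mk, AddHom.coe_mk]
  split_ifs with h
  · symm
    apply Finset.sum_eq_zero
    intro σ _
    simp [mm_x, h]
  · rw [tt_expand n _ _ i]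
    refine Finset.sum_congr rfl fun σ _ => ?_
    congr 2
    · simp [mm_x, h]
    · refine Finset.prod_congr rfl fun j hj => ?_
      have hj : j ≠ i := (Finset.mem_erase.mp hj).1
      simp [Function.update_of_ne hj, Ne.symm hj]

lemma opY_tt (n : ℕ) (i : Fin n) (s) :
    opY n i (tt n s) = tt n (s + Finsupp.single (Sum.inr i) 1) +
      dd n (s (Sum.inl i)) (s (Sum.inr i)) • tt n (s - Finsupp.single (Sum.inl i) 1) := by
  ext k
  rw [Pi.add_apply, Pi.smul_apply, tt_expand n _ k i, tt_expand n _ k i, smul_eq_mul,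
    Finset.mul_sum, ← Finset.sum_add_distrib]
  simp only [opY, LinearMap.coe_mk, AddHom.coe_mk]
  obtain ⟨s1, hs1⟩ : ∃ s1 : Fin n ⊕ Fin n →₀ ℕ, s1 = s + Finsupp.single (Sum.inr i) 1 := ⟨_, rfl⟩
  obtain ⟨s2, hs2⟩ : ∃ s2 : Fin n ⊕ Fin n →₀ ℕ, s2 = s - Finsupp.single (Sum.inl i) 1 := ⟨_, rfl⟩
  rw [← hs1, ← hs2]
  have key : ∀ σ : Equiv.Perm (Fin n),
    ((Equiv.Perm.sign σ : ℤ) : ℂ) * (mm n (s1 (Sum.inl i))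
      (s1 (Sum.inr i)) (k i) (2 * (σ i : ℕ) + 1) *
      ∏ j ∈ Finset.univ.erase i, mm n (s1 (Sum.inl j))
        (s1 (Sum.inr j)) (k j) (2 * (σ j : ℕ) + 1)) +
    dd n (s (Sum.inl i)) (s (Sum.inr i)) * (((Equiv.Perm.sign σ : ℤ) : ℂ) *
      (mm n (s2 (Sum.inl i))
      (s2 (Sum.inr i)) (k i) (2 * (σ i : ℕ) + 1) *
      ∏ j ∈ Finset.univ.erase i, mm n (s2 (Sum.inl j))
        (s2 (Sum.inr j)) (k j) (2 * (σ j : ℕ) + 1)))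
    = ((Equiv.Perm.sign σ : ℤ) : ℂ) * ((ww n (k i + 1) *
      mm n (s (Sum.inl i)) (s (Sum.inr i)) (k i + 1) (2 * (σ i : ℕ) + 1)) *
      ∏ j ∈ Finset.univ.erase i, mm n (s (Sum.inl j)) (s (Sum.inr j)) (k j) (2 * (σ j : ℕ) + 1)) := by
    intro σ
    have p1 : ∏ j ∈ Finset.univ.erase i, mm n (s1 (Sum.inl j))
        (s1 (Sum.inr j)) (k j) (2 * (σ j : ℕ) + 1)
        = ∏ j ∈ Finset.univ.erase i, mm n (s (Sum.inl j)) (s (Sum.inr j)) (k j) (2 * (σ j : ℕ) + 1) := by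
      refine Finset.prod_congr rfl fun j hj => ?_
      have hj : j ≠ i := (Finset.mem_erase.mp hj).1
      simp [hs1, hs2, Ne.symm hj]
    have p2 : ∏ j ∈ Finset.univ.erase i, mm n (s2 (Sum.inl j))
        (s2 (Sum.inr j)) (k j) (2 * (σ j : ℕ) + 1)
        = ∏ j ∈ Finset.univ.erase i, mm n (s (Sum.inl j)) (s (Sum.inr j)) (k j) (2 * (σ j : ℕ) + 1) := by
      refine Finset.prod_congr rfl fun j hj => ?_
      have hj : j ≠ i := (Finset.mem_erase.mp hj).1
      simp [hs1, hs2, Ne.symm hj]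
    rw [p1, p2, mm_y n _ _ _ _ (by omega)]
    simp [hs1, hs2]
    ring
  rw [Finset.sum_congr rfl fun σ _ => key σ]
  split_ifs with h
  · rw [tt_expand n _ _ i, Finset.mul_sum]
    refine Finset.sum_congr rfl fun σ _ => ?_
    have p : ∏ j ∈ Finset.univ.erase i, mm n (s (Sum.inl j)) (s (Sum.inr j))
        (Function.update k i ⟨(k i : ℕ) + 1, h⟩ j) (2 * (σ j : ℕ) + 1)
        = ∏ j ∈ Finset.univ.erase i, mm n (s (Sum.inl j)) (s (Sum.inr j)) (k j) (2 * (σ j : ℕ) + 1) := by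
      refine Finset.prod_congr rfl fun j hj => ?_
      have hj : j ≠ i := (Finset.mem_erase.mp hj).1
      simp [Function.update_of_ne hj]
    rw [p]
    simp
    ring
  · symm
    apply Finset.sum_eq_zero
    intro σ _
    have : (k i : ℕ) + 1 = 2 * n + 1 := by have := (k i).2; omega
    rw [this, ww_top]; simp

/-- surjectivity of `TT` -/
lemma tt_diag (n : ℕ) (a : Fin n → Fin (2 * n + 1)) :
    ∃ s, ∃ c : ℂ, c ≠ 0 ∧ tt n s = c • (Pi.single a 1 : LL n) := by
  refine ⟨Finsupp.equivFunOnFinite.symm (Sum.elim (fun i => (a i : ℕ)) (fun i => 2 * (i : ℕ) + 1)),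
    ∏ i : Fin n, ∏ t ∈ Finset.range (2 * (i : ℕ) + 1), ww n (2 * (i : ℕ) + 1 - t), ?_, ?_⟩
  · rw [Finset.prod_ne_zero_iff]
    intro i _
    rw [Finset.prod_ne_zero_iff]
    intro t ht
    have := Finset.mem_range.mp ht
    have := i.2
    apply ww_ne_zero <;> omega
  · ext k
    unfold tt
    rw [Matrix.det_of_isUpperTriangular]
    · by_cases hk : k = a
      · subst hk
        simp [tmat, mm, add_comm]
      · have : ∃ i, k i ≠ a i := by
          by_contra hc; push Not at hc; exact hk (funext hc)
        obtain ⟨i, hi⟩ := this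
        rw [Finset.prod_eq_zero (Finset.mem_univ i)]
        · simp [Pi.single_apply, hk]
        · simp only [tmat, Matrix.of_apply, mm, Finsupp.equivFunOnFinite_symm_apply_apply, Sum.elim_inl, Sum.elim_inr]
          rw [if_neg]
          rintro ⟨h1, -⟩
          apply hi; apply Fin.ext; omega
    · intro i j hij
      have hij : (j : ℕ) < i := hij
      simp only [tmat, Matrix.of_apply, mm, Finsupp.equivFunOnFinite_symm_apply_apply, Sum.elim_inl, Sum.elim_inr]
      rw [if_neg]
      omega

/-! ### The group action on monomials -/

lemma bAct_monomial (n : ℕ) (ε : Fin n → ℤˣ) (σ : Equiv.Perm (Fin n)) (s) (c : ℂ) :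
    bAct n ε σ (monomial s c) = (∏ i, ((ε i : ℤ) : ℂ) ^ (s (Sum.inl i) + s (Sum.inr i))) •
      monomial (s.mapDomain (Sum.map σ σ)) c := by
  unfold bAct
  have hinj : Function.Injective (Sum.map σ σ) :=
    Function.Injective.sumMap σ.injective σ.injective
  rw [aeval_monomial, Finsupp.prod_fintype _ _ (fun _ => pow_zero _), Fintype.prod_sum_type]
  simp only [Sum.elim_inl, Sum.elim_inr, smul_pow]
  rw [monomial_eq (s := s.mapDomain _), Finsupp.prod_mapDomain_index_inj hinj,
    Finsupp.prod_fintype _ _ (fun _ => pow_zero _), Fintype.prod_sum_type]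
  simp only [Sum.map_inl, Sum.map_inr, MvPolynomial.smul_eq_C_mul, Finset.prod_mul_distrib,
    pow_add, map_mul, map_prod, map_pow, MvPolynomial.algebraMap_eq]
  ring

lemma mapDomain_inl (n : ℕ) (σ : Equiv.Perm (Fin n)) (s : Fin n ⊕ Fin n →₀ ℕ) (i : Fin n) :
    s.mapDomain (Sum.map σ σ) (Sum.inl i) = s (Sum.inl (σ.symm i)) := by
  have hinj : Function.Injective (Sum.map σ σ) :=
    Function.Injective.sumMap σ.injective σ.injective
  have := Finsupp.mapDomain_apply hinj s (Sum.inl (σ.symm i))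
  simpa using this

lemma mapDomain_inr (n : ℕ) (σ : Equiv.Perm (Fin n)) (s : Fin n ⊕ Fin n →₀ ℕ) (i : Fin n) :
    s.mapDomain (Sum.map σ σ) (Sum.inr i) = s (Sum.inr (σ.symm i)) := by
  have hinj : Function.Injective (Sum.map σ σ) :=
    Function.Injective.sumMap σ.injective σ.injective
  have := Finsupp.mapDomain_apply hinj s (Sum.inr (σ.symm i))
  simpa using this

lemma bAct_isHomogeneous (n : ℕ) (ε : Fin n → ℤˣ) (σ : Equiv.Perm (Fin n)) {P : RR n} {m : ℕ}
    (hP : P.IsHomogeneous m) : (bAct n ε σ P).IsHomogeneous m := by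
  have := hP.aeval (S := ℂ) (n := 1) (Sum.elim
    (fun i => (((ε i : ℤ) : ℂ)) • (X (Sum.inl (σ i)) : RR n))
    (fun i => (((ε i : ℤ) : ℂ)) • X (Sum.inr (σ i)))) (by
      rintro (i | i)
      · simp only [Sum.elim_inl, smul_eq_C_mul]
        exact zero_add 1 ▸ (isHomogeneous_C (Fin n ⊕ Fin n) (((ε i : ℤ) : ℂ))).mul (isHomogeneous_X ℂ (Sum.inl (σ i)))
      · simp only [Sum.elim_inr, smul_eq_C_mul]
        exact zero_add 1 ▸ (isHomogeneous_C (Fin n ⊕ Fin n) (((ε i : ℤ) : ℂ))).mul (isHomogeneous_X ℂ (Sum.inr (σ i))))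
  simpa [bAct] using this

lemma bAct_homogeneousComponent (n : ℕ) (ε : Fin n → ℤˣ) (σ : Equiv.Perm (Fin n)) (P : RR n)
    (m : ℕ) : homogeneousComponent m (bAct n ε σ P) = bAct n ε σ (homogeneousComponent m P) := by
  induction P using MvPolynomial.induction_on' with
  | monomial s c =>
    have h1 : (monomial s c : RR n).IsHomogeneous s.degree := isHomogeneous_monomial c rfl
    have h2 := bAct_isHomogeneous n ε σ h1
    rw [homogeneousComponent_of_mem h1, homogeneousComponent_of_mem h2]
    split_ifs <;> simp
  | add p q hp hq => simp [hp, hq]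

lemma tt_perm (n : ℕ) (σ : Equiv.Perm (Fin n)) (s) (k : Fin n → Fin (2 * n + 1)) :
    tt n (s.mapDomain (Sum.map σ σ)) k = ((Equiv.Perm.sign σ : ℤ) : ℂ) * tt n s (k ∘ σ) := by
  unfold tt
  have : tmat n (s.mapDomain (Sum.map σ σ)) k = (tmat n s (k ∘ σ)).submatrix σ.symm id := by
    ext i j
    simp [tmat, mapDomain_inl, mapDomain_inr]
  rw [this]
  have h2 := Matrix.det_permute σ.symm (tmat n s (k ∘ σ))
  rw [h2]
  simp

lemma TT_perm (n : ℕ) (σ : Equiv.Perm (Fin n)) (P : RR n) (k : Fin n → Fin (2 * n + 1)) :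
    TT n (bAct n 1 σ P) k = ((Equiv.Perm.sign σ : ℤ) : ℂ) * TT n P (k ∘ σ) := by
  induction P using MvPolynomial.induction_on' with
  | monomial s c =>
    rw [bAct_monomial, map_smul, TT_monomial, TT_monomial]
    simp [tt_perm]
    ring
  | add p q hp hq => simp only [map_add, Pi.add_apply, hp, hq]; ring

lemma tt_parity (n : ℕ) (s) (k : Fin n → Fin (2 * n + 1)) (i : Fin n)
    (h : ((k i : ℕ) + s (Sum.inl i) + s (Sum.inr i)) % 2 = 0) : tt n s k = 0 := by
  unfold tt
  apply Matrix.det_eq_zero_of_row_eq_zero i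
  intro j
  simp only [tmat, Matrix.of_apply, mm]
  rw [if_neg]
  omega

/-- the sign change at `i` -/
def sflip (n : ℕ) (i : Fin n) : Fin n → ℤˣ := Function.update 1 i (-1)

lemma sflip_prod (n : ℕ) (i : Fin n) (g : Fin n → ℕ) :
    ∏ j, ((sflip n i j : ℤ) : ℂ) ^ (g j) = (-1) ^ (g i) := by
  rw [Finset.prod_eq_single i]
  · simp [sflip]
  · intro j _ hj; simp [sflip, Function.update_of_ne hj]
  · simp

lemma TT_flip (n : ℕ) (i : Fin n) (P : RR n) (k : Fin n → Fin (2 * n + 1)) :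
    TT n (bAct n (sflip n i) 1 P) k = (-1) ^ (k i + 1 : ℕ) * TT n P k := by
  induction P using MvPolynomial.induction_on' with
  | monomial s c =>
    rw [bAct_monomial, map_smul, TT_monomial, TT_monomial,
      sflip_prod n i (fun i => s (Sum.inl i) + s (Sum.inr i))]
    have : s.mapDomain (Sum.map (1 : Equiv.Perm (Fin n)) (1 : Equiv.Perm (Fin n))) = s := by
      ext (i | i)
      · simp [mapDomain_inl]
      · simp [mapDomain_inr]
    rw [this]
    simp only [Pi.smul_apply, smul_eq_mul]
    by_cases h : ((k i : ℕ) + s (Sum.inl i) + s (Sum.inr i)) % 2 = 0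
    · rw [tt_parity n s k i h]; simp
    · congr 1
      rw [neg_one_pow_eq_pow_mod_two, neg_one_pow_eq_pow_mod_two (n := (k i + 1 : ℕ))]
      congr 1
      omega
  | add p q hp hq => simp only [map_add, Pi.add_apply, hp, hq]; ring

/-- antisymmetric functions supported on a parity class -/
def Anti (n par : ℕ) : Submodule ℂ (LL n) where
  carrier := {F | (∀ k i, (k i : ℕ) % 2 ≠ par → F k = 0) ∧
    ∀ (σ : Equiv.Perm (Fin n)) k, F (k ∘ σ) = ((Equiv.Perm.sign σ : ℤ) : ℂ) * F k}
  zero_mem' := by simp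
  add_mem' := by
    rintro F G ⟨h1, h2⟩ ⟨h3, h4⟩
    refine ⟨fun k i h => by simp [h1 k i h, h3 k i h], fun σ k => ?_⟩
    simp only [Pi.add_apply, h2, h4]; ring
  smul_mem' := by
    rintro c F ⟨h1, h2⟩
    refine ⟨fun k i h => by simp [h1 k i h], fun σ k => ?_⟩
    simp only [Pi.smul_apply, h2, smul_eq_mul]; ring

lemma permsign_mul_self (n : ℕ) (σ : Equiv.Perm (Fin n)) :
    ((Equiv.Perm.sign σ : ℤ) : ℂ) * ((Equiv.Perm.sign σ : ℤ) : ℂ) = 1 := by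
  rcases Int.units_eq_one_or (Equiv.Perm.sign σ) with h | h <;> simp [h]

lemma Anti.of_not_inj {n par : ℕ} {F : LL n} (hF : F ∈ Anti n par)
    {k : Fin n → Fin (2 * n + 1)} (hk : ¬ Function.Injective k) : F k = 0 := by
  have : ∃ i j, k i = k j ∧ i ≠ j := by
    by_contra hc; push Not at hc; exact hk fun i j h => hc i j h
  obtain ⟨i, j, h, hij⟩ := this
  have h2 := hF.2 (Equiv.swap i j) k
  have h3 : k ∘ (Equiv.swap i j) = k := by
    ext l
    simp only [Function.comp_apply]
    by_cases h1 : l = i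
    · subst h1; simp [h]
    · by_cases h2 : l = j
      · subst h2; simp [h]
      · rw [Equiv.swap_apply_of_ne_of_ne h1 h2]
  rw [h3, Equiv.Perm.sign_swap hij] at h2
  simp at h2
  have : (2 : ℂ) * F k = 0 := by linear_combination h2
  simpa using this

lemma TT_mem_Anti_one (n : ℕ) (P : RR n) (h : ∀ ε σ, bAct n ε σ P = P) : TT n P ∈ Anti n 1 := by
  constructor
  · intro k i hk
    have h1 := TT_flip n i P k
    rw [h, (show Odd ((k i : ℕ) + 1) by rw [Nat.odd_iff]; omega).neg_one_pow] at h1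
    have : (2 : ℂ) * TT n P k = 0 := by linear_combination h1
    simpa using this
  · intro σ k
    have h1 := TT_perm n σ P k
    rw [h] at h1
    rw [h1, ← mul_assoc, permsign_mul_self, one_mul]

/-- the character `∏ εᵢ` -/
def chi (n : ℕ) (ε : Fin n → ℤˣ) : ℂ := ∏ i, ((ε i : ℤ) : ℂ)

lemma TT_mem_Anti_zero (n : ℕ) (P : RR n) (h : ∀ ε σ, bAct n ε σ P = chi n ε • P) :
    TT n P ∈ Anti n 0 := by
  constructor
  · intro k i hk
    have h1 := TT_flip n i P k
    have h2 : chi n (sflip n i) = -1 := by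
      have := sflip_prod n i (fun _ => 1)
      simpa [chi] using this
    rw [h, (show Even ((k i : ℕ) + 1) by rw [Nat.even_iff]; omega).neg_one_pow, h2] at h1
    simp at h1
    have : (2 : ℂ) * TT n P k = 0 := by linear_combination -h1
    simpa using this
  · intro σ k
    have h1 := TT_perm n σ P k
    rw [h] at h1
    simp [chi] at h1
    rw [h1, ← mul_assoc, permsign_mul_self, one_mul]

lemma Anti_one_ext {n : ℕ} {F : LL n} (hF : F ∈ Anti n 1)
    (h : F (fun i => ⟨2 * (i : ℕ) + 1, by omega⟩) = 0) : F = 0 := by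
  ext k
  show F k = 0
  by_cases hp : ∀ i, (k i : ℕ) % 2 = 1
  · by_cases hk : Function.Injective k
    · let τ : Fin n → Fin n := fun i => ⟨(k i : ℕ) / 2, by have := (k i).2; have := hp i; omega⟩
      have hτ : Function.Injective τ := by
        intro i j hij
        apply hk
        have h1 : (k i : ℕ) / 2 = (k j : ℕ) / 2 := congrArg Fin.val hij
        apply Fin.ext
        have := hp i; have := hp j
        omega
      have := hF.2 (Equiv.ofBijective τ (Finite.injective_iff_bijective.mp hτ))
        (fun i => ⟨2 * (i : ℕ) + 1, by omega⟩)
      rw [h, mul_zero] at this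
      convert this using 2
      · ext i
        have := hp i
        simp [τ]
        omega
    · exact Anti.of_not_inj hF hk
  · push Not at hp
    obtain ⟨i, hi⟩ := hp
    exact hF.1 k i hi

lemma Anti_zero_ext {n : ℕ} {F : LL n} (hF : F ∈ Anti n 0)
    (h : ∀ j : Fin (n + 1), F (fun i => ⟨2 * (j.succAbove i : ℕ), by omega⟩) = 0) : F = 0 := by
  ext k
  show F k = 0
  by_cases hp : ∀ i, (k i : ℕ) % 2 = 0
  · by_cases hk : Function.Injective k
    · let τ : Fin n → Fin (n + 1) := fun i => ⟨(k i : ℕ) / 2, by have := (k i).2; have := hp i; omega⟩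
      have hτ : Function.Injective τ := by
        intro i j hij
        apply hk
        have h1 : (k i : ℕ) / 2 = (k j : ℕ) / 2 := congrArg Fin.val hij
        apply Fin.ext
        have := hp i; have := hp j
        omega
      have hns : ¬ Function.Surjective τ := by
        intro hs
        have := Fintype.card_le_of_surjective τ hs
        simp at this
      obtain ⟨j, hj⟩ : ∃ j, ∀ i, τ i ≠ j := by
        by_contra hc; push Not at hc; exact hns hc
      have hex : ∀ i, ∃ l, j.succAbove l = τ i := fun i => Fin.exists_succAbove_eq (hj i)
      choose ρ hρ using hex
      have hρi : Function.Injective ρ := by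
        intro a b hab
        apply hτ
        rw [← hρ, ← hρ, hab]
      have := hF.2 (Equiv.ofBijective ρ (Finite.injective_iff_bijective.mp hρi))
        (fun i => ⟨2 * (j.succAbove i : ℕ), by omega⟩)
      rw [h, mul_zero] at this
      convert this using 2
      · ext i
        have := hp i
        simp [hρ, τ]
        omega
    · exact Anti.of_not_inj hF hk
  · push Not at hp
    obtain ⟨i, hi⟩ := hp
    exact hF.1 k i hi

lemma finrank_Anti_zero (n : ℕ) : Module.finrank ℂ (Anti n 0) ≤ n + 1 := by
  let f : Anti n 0 →ₗ[ℂ] (Fin (n + 1) → ℂ) :=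
    { toFun := fun F j => F.1 (fun i => ⟨2 * (j.succAbove i : ℕ), by omega⟩)
      map_add' := fun _ _ => rfl
      map_smul' := fun _ _ => rfl }
  have hf : Function.Injective f := by
    rw [← LinearMap.ker_eq_bot, LinearMap.ker_eq_bot']
    intro F hF
    apply Subtype.ext
    exact Anti_zero_ext F.2 fun j => congrFun hF j
  have := LinearMap.finrank_le_finrank_of_injective hf
  simpa using this

lemma bAct_one (n : ℕ) (ε σ) : bAct n ε σ 1 = 1 := map_one _

lemma TT_inv (n : ℕ) (P : RR n) (h : ∀ ε σ, bAct n ε σ P = P) :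
    ∃ c : ℂ, TT n P = c • tt n 0 := by
  have h1 := TT_mem_Anti_one n P h
  have h0 : TT n (1 : RR n) = tt n 0 := TT_monomial_one n 0
  have h2 : tt n 0 ∈ Anti n 1 := by
    rw [← h0]
    exact TT_mem_Anti_one n 1 fun ε σ => map_one _
  have hv : tt n 0 (fun i => ⟨2 * (i : ℕ) + 1, by omega⟩) = 1 := by
    unfold tt
    have : tmat n 0 (fun i => ⟨2 * (i : ℕ) + 1, by omega⟩) = 1 := by
      ext i j
      simp [tmat, mm, Matrix.one_apply, Fin.ext_iff]
    rw [this, Matrix.det_one]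
  refine ⟨TT n P (fun i => ⟨2 * (i : ℕ) + 1, by omega⟩), ?_⟩
  rw [← sub_eq_zero]
  apply Anti_one_ext ((Anti n 1).sub_mem h1 ((Anti n 1).smul_mem _ h2))
  simp [hv]

/-! ### The ideal attached to the filtration -/

/-- span of the images of monomials of degree less than `m` -/
noncomputable def NN (n m : ℕ) : Submodule ℂ (LL n) :=
  Submodule.span ℂ {F | ∃ s : Fin n ⊕ Fin n →₀ ℕ, s.degree < m ∧ F = tt n s}

lemma tt_mem_NN {n m : ℕ} {s : Fin n ⊕ Fin n →₀ ℕ} (h : s.degree < m) : tt n s ∈ NN n m :=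
  Submodule.subset_span ⟨s, h, rfl⟩

lemma opX_NN {n m : ℕ} (i : Fin n) {F : LL n} (hF : F ∈ NN n m) : opX n i F ∈ NN n (m + 1) := by
  have : NN n m ≤ (NN n (m + 1)).comap (opX n i) := by
    unfold NN
    rw [Submodule.span_le]
    rintro _ ⟨s, hs, rfl⟩
    show opX n i (tt n s) ∈ NN n (m + 1)
    rw [opX_tt]
    apply tt_mem_NN
    simp only [map_add, Finsupp.degree_single]
    omega
  exact this hF

lemma degree_sub_le {n : ℕ} (s t : Fin n ⊕ Fin n →₀ ℕ) : (s - t).degree ≤ s.degree := by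
  exact Finsupp.degree_mono tsub_le_self

lemma opY_NN {n m : ℕ} (i : Fin n) {F : LL n} (hF : F ∈ NN n m) : opY n i F ∈ NN n (m + 1) := by
  have : NN n m ≤ (NN n (m + 1)).comap (opY n i) := by
    unfold NN
    rw [Submodule.span_le]
    rintro _ ⟨s, hs, rfl⟩
    show opY n i (tt n s) ∈ NN n (m + 1)
    rw [opY_tt]
    apply Submodule.add_mem
    · apply tt_mem_NN
      simp only [map_add, Finsupp.degree_single]
      omega
    · apply Submodule.smul_mem
      apply tt_mem_NN
      have := degree_sub_le s (Finsupp.single (Sum.inl i) 1)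
      omega
  exact this hF

lemma TT_X_inl (n : ℕ) (i : Fin n) (P : RR n) : TT n (X (Sum.inl i) * P) = opX n i (TT n P) := by
  induction P using MvPolynomial.induction_on' with
  | monomial s c =>
    rw [X, monomial_mul, one_mul, TT_monomial, TT_monomial, map_smul, opX_tt, add_comm s]
  | add p q hp hq => simp only [map_add, mul_add, hp, hq]

lemma TT_X_inr (n m : ℕ) (i : Fin n) (P : RR n) (hP : P.IsHomogeneous m) :
    TT n (X (Sum.inr i) * P) - opY n i (TT n P) ∈ NN n (m + 1) := by
  have key : ∀ s ∈ P.support, TT n (X (Sum.inr i) * monomial s (P.coeff s)) -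
      opY n i (TT n (monomial s (P.coeff s))) ∈ NN n (m + 1) := by
    intro s hs
    have hd : s.degree = m := by
      have := hP (mem_support_iff.mp hs)
      rw [Finsupp.degree_eq_weight_one]; exact this
    rw [X, monomial_mul, one_mul, TT_monomial, TT_monomial, map_smul, opY_tt, add_comm s]
    have : coeff s P • tt n (Finsupp.single (Sum.inr i) 1 + s) - coeff s P •
        (tt n (Finsupp.single (Sum.inr i) 1 + s) + dd n (s (Sum.inl i)) (s (Sum.inr i)) •
          tt n (s - Finsupp.single (Sum.inl i) 1)) =
        (- (coeff s P * dd n (s (Sum.inl i)) (s (Sum.inr i)))) •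
          tt n (s - Finsupp.single (Sum.inl i) 1) := by
      module
    rw [this]
    apply Submodule.smul_mem
    apply tt_mem_NN
    have := degree_sub_le s (Finsupp.single (Sum.inl i) 1)
    omega
  have h2 := Submodule.sum_mem _ key
  rw [Finset.sum_sub_distrib, ← map_sum, ← map_sum, ← map_sum, ← Finset.mul_sum,
    ← P.as_sum] at h2
  exact h2

lemma hc_X_mul {τ : Type*} (v : τ) (P : MvPolynomial τ ℂ) (m : ℕ) :
    homogeneousComponent (m + 1) (X v * P) = X v * homogeneousComponent m P := by
  induction P using MvPolynomial.induction_on' with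
  | monomial s c =>
    have h1 : (monomial s c : MvPolynomial τ ℂ).IsHomogeneous s.degree := isHomogeneous_monomial c rfl
    have h2 := (isHomogeneous_X ℂ v).mul h1
    rw [homogeneousComponent_of_mem h1, homogeneousComponent_of_mem h2]
    by_cases h : m = s.degree
    · rw [if_pos h, if_pos (by omega)]
    · rw [if_neg h, if_neg (by omega), mul_zero]
  | add p q hp hq => simp [hp, hq, mul_add]

lemma hc_X_mul_zero {τ : Type*} (v : τ) (P : MvPolynomial τ ℂ) :
    homogeneousComponent 0 (X v * P) = 0 := by
  rw [homogeneousComponent_zero, ← constantCoeff_eq]; simp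

/-- the ideal of polynomials all of whose components drop in the filtration -/
noncomputable def J1 (n : ℕ) : Ideal (RR n) where
  carrier := {Q | ∀ m, TT n (homogeneousComponent m Q) ∈ NN n m}
  zero_mem' := by intro m; simp
  add_mem' := by
    intro P Q hP hQ m
    rw [map_add, map_add]
    exact Submodule.add_mem _ (hP m) (hQ m)
  smul_mem' := by
    intro r Q hQ
    rw [smul_eq_mul]
    induction r using MvPolynomial.induction_on with
    | C a =>
      intro m
      rw [← smul_eq_C_mul, map_smul, map_smul]
      exact Submodule.smul_mem _ _ (hQ m)
    | add p q hp hq =>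
      intro m
      rw [add_mul, map_add, map_add]
      exact Submodule.add_mem _ (hp m) (hq m)
    | mul_X p v hp =>
      rw [mul_comm p, mul_assoc]
      generalize p * Q = Q' at hp
      intro m
      rcases m with _ | m
      · rw [hc_X_mul_zero]; simp
      rw [hc_X_mul]
      rcases v with i | i
      · rw [TT_X_inl]
        exact opX_NN i (hp m)
      · have h1 := TT_X_inr n m i _ (homogeneousComponent_isHomogeneous m Q')
        have h2 := opY_NN i (hp m)
        have := Submodule.add_mem _ h1 h2
        rwa [sub_add_cancel] at this

lemma diagIdeal_le_J1 (n : ℕ) : diagIdeal n ≤ J1 n := by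
  unfold diagIdeal
  rw [Ideal.span_le]
  rintro p ⟨hp, hc⟩ m
  rcases m with _ | m
  · rw [homogeneousComponent_zero, ← constantCoeff_eq, hc]; simp
  · obtain ⟨c, hc⟩ := TT_inv n (homogeneousComponent (m + 1) p) (fun ε σ => by
      rw [← bAct_homogeneousComponent, hp])
    rw [hc]
    apply Submodule.smul_mem
    apply tt_mem_NN
    simp
/-! ### Finite-dimensionality -/

lemma bAct_X_inl (n : ℕ) (ε : Fin n → ℤˣ) (σ : Equiv.Perm (Fin n)) (i : Fin n) :
    bAct n ε σ (X (Sum.inl i)) = (((ε i : ℤ) : ℂ)) • X (Sum.inl (σ i)) := by simp [bAct]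

lemma bAct_X_inr (n : ℕ) (ε : Fin n → ℤˣ) (σ : Equiv.Perm (Fin n)) (i : Fin n) :
    bAct n ε σ (X (Sum.inr i)) = (((ε i : ℤ) : ℂ)) • X (Sum.inr (σ i)) := by simp [bAct]

lemma eps_sq (e : ℤˣ) : (((e : ℤ) : ℂ)) ^ 2 = 1 := by
  rcases Int.units_eq_one_or e with h | h <;> simp [h]

lemma nilp_aux (n : ℕ) (g : Fin n → RR n)
    (hg : ∀ ε σ i, bAct n ε σ (g i) = g (σ i)) (hg0 : ∀ i, constantCoeff (g i) = 0) (i : Fin n) :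
    g i ^ n ∈ diagIdeal n := by
  set F : Polynomial (RR n) := ∏ j, (Polynomial.X - Polynomial.C (g j)) with hF
  have hinv : ∀ ε σ, F.map (bAct n ε σ : RR n →+* RR n) = F := by
    intro ε σ
    rw [hF, Polynomial.map_prod]
    simp only [Polynomial.map_sub, Polynomial.map_X, Polynomial.map_C, RingHom.coe_coe, hg]
    exact Equiv.prod_comp σ (fun j => Polynomial.X - Polynomial.C (g j))
  have hcc : F.map (constantCoeff : RR n →+* ℂ) = Polynomial.X ^ n := by
    rw [hF, Polynomial.map_prod]
    simp [hg0]
  have hmk : F.map (Ideal.Quotient.mk (diagIdeal n)) = Polynomial.X ^ n := by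
    ext k
    rw [Polynomial.coeff_map]
    have h1 : F.coeff k - C (constantCoeff (F.coeff k)) ∈ diagIdeal n := by
      apply Ideal.subset_span
      refine ⟨fun ε σ => ?_, by simp⟩
      rw [map_sub]
      congr 1
      · conv_rhs => rw [← hinv ε σ]
        rw [Polynomial.coeff_map]; rfl
      · exact AlgHom.commutes _ _
    rw [← Ideal.Quotient.mk_eq_mk_iff_sub_mem] at h1
    rw [h1, ← Polynomial.coeff_map, hcc]
    simp only [Polynomial.coeff_X_pow]
    split_ifs <;> simp
  have hev : Polynomial.eval (g i) F = 0 := by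
    rw [hF, Polynomial.eval_prod]
    exact Finset.prod_eq_zero (Finset.mem_univ i) (by simp)
  have h2 := Polynomial.eval_map_apply (Ideal.Quotient.mk (diagIdeal n)) (p := F) (g i)
  rw [hmk, hev] at h2
  rw [← Ideal.Quotient.eq_zero_iff_mem]
  simpa using h2

lemma X_pow_mem (n : ℕ) (v : Fin n ⊕ Fin n) : (X v : RR n) ^ (2 * n) ∈ diagIdeal n := by
  rw [pow_mul]
  rcases v with i | i
  · exact nilp_aux n (fun i => X (Sum.inl i) ^ 2) (fun ε σ i => by
      rw [map_pow, bAct_X_inl, smul_pow, eps_sq, one_smul]) (fun i => by simp) i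
  · exact nilp_aux n (fun i => X (Sum.inr i) ^ 2) (fun ε σ i => by
      rw [map_pow, bAct_X_inr, smul_pow, eps_sq, one_smul]) (fun i => by simp) i

lemma finite_quot (n : ℕ) : Module.Finite ℂ (RR n ⧸ diagIdeal n) := by
  rcases Nat.eq_zero_or_pos n with rfl | hn
  · infer_instance
  let S : Set (RR n ⧸ diagIdeal n) := Set.range fun v => Ideal.Quotient.mkₐ ℂ (diagIdeal n) (X v)
  have h1 : (Subalgebra.toSubmodule (Algebra.adjoin ℂ S)).FG := by
    apply fg_adjoin_of_finite (Set.finite_range _)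
    rintro _ ⟨v, rfl⟩
    refine ⟨Polynomial.X ^ (2 * n), Polynomial.monic_X_pow _, ?_⟩
    simp only [Polynomial.eval₂_X_pow]
    rw [← map_pow]
    exact Ideal.Quotient.eq_zero_iff_mem.mpr (X_pow_mem n v)
  have h2 : Algebra.adjoin ℂ S = ⊤ := by
    have h3 := MvPolynomial.adjoin_range_X (R := ℂ) (σ := Fin n ⊕ Fin n)
    have h4 := congrArg (Subalgebra.map (Ideal.Quotient.mkₐ ℂ (diagIdeal n))) h3
    rw [AlgHom.map_adjoin, ← Set.range_comp, Algebra.map_top] at h4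
    rw [show S = Set.range (_ ∘ _) from rfl, h4]
    exact (AlgHom.range_eq_top _).mpr (Ideal.Quotient.mkₐ_surjective _ _)
  rw [h2, Algebra.top_toSubmodule] at h1
  exact ⟨h1⟩
/-! ### Invariants lie in any ideal containing the polarized power sums -/

/-- `x_i^c y_i^d` -/
noncomputable def mon (n : ℕ) (i : Fin n) (q : ℕ × ℕ) : RR n :=
  X (Sum.inl i) ^ q.1 * X (Sum.inr i) ^ q.2

lemma mon_add (n : ℕ) (i : Fin n) (q r : ℕ × ℕ) : mon n i (q + r) = mon n i q * mon n i r := by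
  simp only [mon, Prod.fst_add, Prod.snd_add, pow_add]; ring

lemma mon_zero (n : ℕ) (i : Fin n) : mon n i 0 = 1 := by simp [mon]

/-- monomial symmetrization -/
noncomputable def symM (n : ℕ) (e : Fin n → ℕ × ℕ) : RR n :=
  ∑ σ : Equiv.Perm (Fin n), ∏ i, mon n (σ i) (e i)

lemma symM_comp (n : ℕ) (e : Fin n → ℕ × ℕ) (τ : Equiv.Perm (Fin n)) :
    symM n (e ∘ τ) = symM n e := by
  unfold symM
  rw [← Equiv.sum_comp (Equiv.mulRight τ)]
  refine Finset.sum_congr rfl fun σ _ => ?_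
  simp only [Equiv.coe_mulRight, Equiv.Perm.mul_apply, Function.comp_apply]
  exact Equiv.prod_comp τ (fun i => mon n (σ i) (e i))

lemma prod_update_mon (n : ℕ) (e : Fin n → ℕ × ℕ) (σ : Equiv.Perm (Fin n)) (l : Fin n)
    (q : ℕ × ℕ) : ∏ i, mon n (σ i) (Function.update e l (e l + q) i) =
      (∏ i, mon n (σ i) (e i)) * mon n (σ l) q := by
  rw [← Finset.mul_prod_erase _ _ (Finset.mem_univ l),
    ← Finset.mul_prod_erase _ (fun i => mon n (σ i) (e i)) (Finset.mem_univ l)]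
  have : ∏ x ∈ Finset.univ.erase l, mon n (σ x) (Function.update e l (e l + q) x) =
      ∏ x ∈ Finset.univ.erase l, mon n (σ x) (e x) := by
    refine Finset.prod_congr rfl fun x hx => ?_
    rw [Function.update_of_ne (Finset.ne_of_mem_erase hx)]
  rw [this, Function.update_self, mon_add]
  ring

lemma symM_mul (n : ℕ) (e : Fin n → ℕ × ℕ) (q : ℕ × ℕ) :
    symM n e * (∑ i, mon n i q) = ∑ l, symM n (Function.update e l (e l + q)) := by
  unfold symM
  rw [Finset.sum_comm, Finset.sum_mul]
  refine Finset.sum_congr rfl fun σ _ => ?_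
  simp only [prod_update_mon]
  rw [← Finset.mul_sum, Equiv.sum_comp σ (fun l => mon n l q)]

lemma symM_mem (n : ℕ) (J : Ideal (RR n))
    (hJ : ∀ q : ℕ × ℕ, q ≠ 0 → (q.1 + q.2) % 2 = 0 → ∑ i, mon n i q ∈ J) (k : ℕ) :
    ∀ e : Fin n → ℕ × ℕ, (∀ i, ((e i).1 + (e i).2) % 2 = 0) → e ≠ 0 →
      (Finset.univ.filter fun i => e i ≠ 0).card = k → symM n e ∈ J := by
  induction k using Nat.strong_induction_on with
  | _ k ih =>
  intro e he h0 hk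
  obtain ⟨i0, hi0⟩ : ∃ i, e i ≠ 0 := by
    by_contra hc; push Not at hc; exact h0 (funext hc)
  set e' := Function.update e i0 0 with he'
  have hmul := symM_mul n e' (e i0)
  have hmem : symM n e' * (∑ i, mon n i (e i0)) ∈ J := J.mul_mem_left _ (hJ _ hi0 (he i0))
  have hi0' : e' i0 = 0 := by simp [he']
  have hlt : (Finset.univ.filter fun i => e' i ≠ 0).card < k := by
    rw [← hk]
    apply Finset.card_lt_card
    rw [Finset.ssubset_iff_of_subset]
    · exact ⟨i0, by simpa using hi0, by simp [hi0']⟩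
    · intro i hi
      simp only [Finset.mem_filter, Finset.mem_univ, true_and] at hi ⊢
      by_cases h : i = i0
      · subst h; exact hi0
      · rwa [he', Function.update_of_ne h] at hi
  have h1 : ∀ l, e' l ≠ 0 → symM n (Function.update e' l (e' l + e i0)) ∈ J := by
    intro l hl
    have hli : l ≠ i0 := by rintro rfl; exact hl hi0'
    have hne : e' l + e i0 ≠ 0 := by
      intro h
      apply hl
      have h1 := congrArg Prod.fst h
      have h2 := congrArg Prod.snd h
      simp at h1 h2
      exact Prod.ext h1.1 h2.1
    refine ih _ hlt _ ?_ ?_ ?_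
    · intro i
      by_cases h : i = l
      · subst h
        rw [Function.update_self, he', Function.update_of_ne hli]
        have := he i; have := he i0
        simp only [Prod.fst_add, Prod.snd_add]
        omega
      · rw [Function.update_of_ne h, he']
        by_cases h' : i = i0
        · subst h'; simp
        · rw [Function.update_of_ne h']; exact he i
    · intro h
      apply hne
      have := congrFun h l
      simpa using this
    · congr 1
      ext i
      simp only [Finset.mem_filter, Finset.mem_univ, true_and]
      by_cases h : i = l
      · subst h; simp [hl, hne]
      · rw [Function.update_of_ne h]
  have h2 : ∀ l, e' l = 0 → symM n (Function.update e' l (e' l + e i0)) = symM n e := by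
    intro l hl
    rw [hl, zero_add, ← symM_comp n e (Equiv.swap l i0)]
    congr 1
    ext1 i
    simp only [Function.comp_apply]
    by_cases h : i = l
    · subst h; simp
    · rw [Function.update_of_ne h]
      by_cases h' : i = i0
      · subst h'
        rw [Equiv.swap_apply_right, hi0']
        rw [he', Function.update_of_ne (Ne.symm h)] at hl
        exact hl.symm
      · rw [Equiv.swap_apply_of_ne_of_ne h h', he', Function.update_of_ne h']
  rw [hmul, ← Finset.sum_filter_add_sum_filter_not _ (fun l => e' l ≠ 0)] at hmem
  have h3 := (Submodule.add_mem_iff_right J (Submodule.sum_mem J fun l hl =>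
    h1 l (Finset.mem_filter.mp hl).2)).mp hmem
  rw [Finset.sum_congr rfl fun l hl => h2 l (by simpa using hl), Finset.sum_const,
    ← Nat.cast_smul_eq_nsmul ℂ] at h3
  set N := (Finset.univ.filter fun l => ¬ e' l ≠ 0).card with hN
  have hN0 : (N : ℂ) ≠ 0 := by
    rw [Nat.cast_ne_zero, hN, Finset.card_ne_zero]
    exact ⟨i0, by simp [hi0']⟩
  rw [smul_eq_C_mul] at h3
  have h4 := J.mul_mem_left (C (N : ℂ)⁻¹) h3
  rwa [← mul_assoc, ← C_mul, inv_mul_cancel₀ hN0, C_1, one_mul] at h4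

lemma mapDomain_one (n : ℕ) (s : Fin n ⊕ Fin n →₀ ℕ) :
    s.mapDomain (Sum.map (1 : Equiv.Perm (Fin n)) (1 : Equiv.Perm (Fin n))) = s := by
  ext (i | i) <;> simp

lemma coeff_flip (n : ℕ) (i : Fin n) (P : RR n) (s : Fin n ⊕ Fin n →₀ ℕ) :
    coeff s (bAct n (sflip n i) 1 P) = (-1) ^ (s (Sum.inl i) + s (Sum.inr i)) * coeff s P := by
  induction P using MvPolynomial.induction_on' with
  | monomial t c =>
    rw [bAct_monomial, sflip_prod n i (fun i => t (Sum.inl i) + t (Sum.inr i)), mapDomain_one,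
      coeff_smul, coeff_monomial]
    split_ifs with h
    · subst h; rfl
    · simp
  | add p q hp hq => simp only [map_add, coeff_add, hp, hq]; ring

lemma bAct_perm_monomial (n : ℕ) (σ : Equiv.Perm (Fin n)) (s : Fin n ⊕ Fin n →₀ ℕ) :
    bAct n 1 σ (monomial s 1) = ∏ i, mon n (σ i) (s (Sum.inl i), s (Sum.inr i)) := by
  unfold bAct
  rw [aeval_monomial, Finsupp.prod_fintype _ _ (fun _ => pow_zero _), Fintype.prod_sum_type]
  simp [mon, Finset.prod_mul_distrib]

lemma diagIdeal_le_of (n : ℕ) (J : Ideal (RR n))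
    (hJ : ∀ q : ℕ × ℕ, q ≠ 0 → (q.1 + q.2) % 2 = 0 → ∑ i, mon n i q ∈ J) : diagIdeal n ≤ J := by
  unfold diagIdeal
  rw [Ideal.span_le]
  rintro p ⟨hp, hc⟩
  have hsum : ((Fintype.card (Equiv.Perm (Fin n)) : ℕ) : ℂ) • p =
      ∑ s ∈ p.support, p.coeff s • symM n (fun i => (s (Sum.inl i), s (Sum.inr i))) := by
    calc ((Fintype.card (Equiv.Perm (Fin n)) : ℕ) : ℂ) • p
        = ∑ σ : Equiv.Perm (Fin n), bAct n 1 σ p := by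
          simp [hp, Nat.cast_smul_eq_nsmul]
      _ = ∑ σ : Equiv.Perm (Fin n), ∑ s ∈ p.support, p.coeff s • bAct n 1 σ (monomial s 1) := by
          refine Finset.sum_congr rfl fun σ _ => ?_
          conv_lhs => rw [p.as_sum]
          rw [map_sum]
          refine Finset.sum_congr rfl fun s _ => ?_
          rw [← map_smul, smul_monomial, smul_eq_mul, mul_one]
      _ = _ := by
          rw [Finset.sum_comm]
          refine Finset.sum_congr rfl fun s _ => ?_
          rw [← Finset.smul_sum]
          simp only [bAct_perm_monomial]
          rfl
  have hmem : ((Fintype.card (Equiv.Perm (Fin n)) : ℕ) : ℂ) • p ∈ J := by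
    rw [hsum]
    refine Submodule.sum_mem J fun s hs => ?_
    rw [smul_eq_C_mul]
    apply J.mul_mem_left
    have hs' := mem_support_iff.mp hs
    refine symM_mem n J hJ _ _ ?_ ?_ rfl
    · intro i
      have h1 := coeff_flip n i p s
      rw [hp] at h1
      by_contra hodd
      rw [(show Odd (s (Sum.inl i) + s (Sum.inr i)) by rw [Nat.odd_iff]; simp at hodd; omega).neg_one_pow] at h1
      have : (2 : ℂ) * coeff s p = 0 := by linear_combination h1
      simp at this
      exact hs' this
    · intro h0
      apply hs'
      have : s = 0 := by
        ext (i | i)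
        · exact congrArg Prod.fst (congrFun h0 i)
        · exact congrArg Prod.snd (congrFun h0 i)
      rw [this, ← constantCoeff_eq, hc]
  have hN0 : ((Fintype.card (Equiv.Perm (Fin n)) : ℕ) : ℂ) ≠ 0 := by
    rw [Nat.cast_ne_zero]; exact Fintype.card_ne_zero
  rw [smul_eq_C_mul] at hmem
  have h4 := J.mul_mem_left (C ((Fintype.card (Equiv.Perm (Fin n)) : ℕ) : ℂ)⁻¹) hmem
  rwa [← mul_assoc, ← C_mul, inv_mul_cancel₀ hN0, C_1, one_mul] at h4
/-! ### Functionals from polynomials in the variables `Z_{ab}` -/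

abbrev SS := MvPolynomial (ℕ × ℕ) ℂ

noncomputable def ffac (μ : ℕ × ℕ →₀ ℕ) : ℂ := μ.prod fun _ a => (a.factorial : ℂ)

lemma ffac_ne_zero (μ : ℕ × ℕ →₀ ℕ) : ffac μ ≠ 0 := by
  unfold ffac Finsupp.prod
  rw [Finset.prod_ne_zero_iff]
  intro i _
  exact Nat.cast_ne_zero.mpr (Nat.factorial_pos _).ne'

lemma ffac_add_single (μ : ℕ × ℕ →₀ ℕ) (k : ℕ × ℕ) :
    ffac (μ + Finsupp.single k 1) = (μ k + 1) * ffac μ := by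
  unfold ffac
  have h1 : μ.support ⊆ insert k μ.support := Finset.subset_insert _ _
  have h2 : (μ + Finsupp.single k 1).support ⊆ insert k μ.support := by
    intro x hx
    by_cases h : x = k
    · simp [h]
    · rw [Finset.mem_insert]; right
      rw [Finsupp.mem_support_iff] at hx ⊢
      rwa [Finsupp.add_apply, Finsupp.single_eq_of_ne h, add_zero] at hx
  rw [Finsupp.prod_of_support_subset _ h1 _ (by simp), Finsupp.prod_of_support_subset _ h2 _ (by simp),
    ← Finset.mul_prod_erase _ _ (Finset.mem_insert_self k _),
    ← Finset.mul_prod_erase _ (fun x => ((μ x).factorial : ℂ)) (Finset.mem_insert_self k _)]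
  have : ∏ x ∈ (insert k μ.support).erase k, ((((μ + Finsupp.single k 1 : ℕ × ℕ →₀ ℕ)) x).factorial : ℂ) =
      ∏ x ∈ (insert k μ.support).erase k, ((μ x).factorial : ℂ) := by
    refine Finset.prod_congr rfl fun x hx => ?_
    rw [Finsupp.add_apply, Finsupp.single_eq_of_ne (Finset.ne_of_mem_erase hx), add_zero]
  rw [this, Finsupp.add_apply, Finsupp.single_eq_same, Nat.factorial_succ]
  push_cast
  ring

/-- evaluation of the iterated derivative `∂^μ` at the origin -/
noncomputable def lf (μ : ℕ × ℕ →₀ ℕ) : SS →ₗ[ℂ] ℂ := ffac μ • lcoeff ℂ μ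

lemma lf_apply (μ : ℕ × ℕ →₀ ℕ) (f : SS) : lf μ f = ffac μ * coeff μ f := rfl

lemma lf_pderiv (μ : ℕ × ℕ →₀ ℕ) (k : ℕ × ℕ) (f : SS) :
    lf μ (pderiv k f) = lf (μ + Finsupp.single k 1) f := by
  rw [lf_apply, lf_apply, coeff_pderiv, ffac_add_single]
  ring

/-- the lowering derivation -/
noncomputable def Ed (q : ℕ × ℕ) : Derivation ℂ SS SS :=
  mkDerivation ℂ fun k => if q.1 ≤ k.1 ∧ q.2 ≤ k.2 then X (k.1 - q.1, k.2 - q.2) else 0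

lemma Ed_X (q k : ℕ × ℕ) :
    Ed q (X k) = if q.1 ≤ k.1 ∧ q.2 ≤ k.2 then X (k.1 - q.1, k.2 - q.2) else 0 := by
  simp [Ed]

lemma pderiv_Ed (q l : ℕ × ℕ) (f : SS) :
    pderiv l (Ed q f) = Ed q (pderiv l f) + pderiv (l + q) f := by
  have h : ⁅(pderiv l : Derivation ℂ SS SS), Ed q⁆ = pderiv (l + q) := by
    apply MvPolynomial.derivation_ext
    intro k
    rw [Derivation.commutator_apply, Ed_X, pderiv_X, pderiv_X]
    have h0 : Ed q (Pi.single (M := fun _ => SS) l 1 k) = 0 := by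
      by_cases h : k = l
      · subst h; simp
      · simp [Pi.single_eq_of_ne h]
    rw [h0, sub_zero]
    split_ifs with h
    · rw [pderiv_X]
      by_cases h2 : k = l + q
      · subst h2; simp
      · rw [Pi.single_eq_of_ne h2, Pi.single_eq_of_ne]
        rintro rfl
        apply h2
        ext <;> simp <;> omega
    · rw [map_zero, Pi.single_eq_of_ne]
      rintro rfl
      apply h
      simp
  have := DFunLike.congr_fun h f
  rw [Derivation.commutator_apply] at this
  rw [← this]; ring

lemma cc_Ed (q : ℕ × ℕ) (f : SS) : constantCoeff (Ed q f) = 0 := by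
  induction f using MvPolynomial.induction_on with
  | C a => rw [← algebraMap_eq, Derivation.map_algebraMap, map_zero]
  | add p r hp hr => rw [map_add, map_add, hp, hr, add_zero]
  | mul_X p v hp =>
    rw [Derivation.leibniz, map_add, smul_eq_mul, smul_eq_mul, map_mul, map_mul, hp, Ed_X]
    split_ifs <;> simp

lemma lf_Ed {ι : Type*} [DecidableEq ι] (q : ℕ × ℕ) (e : ι → ℕ × ℕ) (A : Finset ι) :
    ∀ f : SS, lf (∑ j ∈ A, Finsupp.single (e j) 1) (Ed q f) =
      ∑ i ∈ A, lf (∑ j ∈ A.erase i, Finsupp.single (e j) 1 + Finsupp.single (e i + q) 1) f := by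
  induction A using Finset.induction_on with
  | empty =>
    intro f
    rw [Finset.sum_empty, Finset.sum_empty, lf_apply, ← constantCoeff_eq, cc_Ed, mul_zero]
  | insert a A ha ih =>
    intro f
    rw [Finset.sum_insert ha, add_comm, ← lf_pderiv, pderiv_Ed, map_add, ih, lf_pderiv,
      Finset.sum_insert ha, Finset.erase_insert ha, add_comm]
    congr 1
    refine Finset.sum_congr rfl fun i hi => ?_
    have hia : a ≠ i := by rintro rfl; exact ha hi
    rw [Finset.erase_insert_of_ne hia, Finset.sum_insert (fun h => ha (Finset.mem_of_mem_erase h)),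
      lf_pderiv]
    congr 1
    ac_rfl

/-- exponent pairs -/
def ee (n : ℕ) (s : Fin n ⊕ Fin n →₀ ℕ) (i : Fin n) : ℕ × ℕ := (s (Sum.inl i), s (Sum.inr i))

noncomputable def mu (n : ℕ) (e : Fin n → ℕ × ℕ) : ℕ × ℕ →₀ ℕ := ∑ i, Finsupp.single (e i) 1

noncomputable def phi (n : ℕ) : SS →ₗ[ℂ] (RR n →ₗ[ℂ] ℂ) :=
  ((basisMonomials (Fin n ⊕ Fin n) ℂ).constr ℂ).toLinearMap ∘ₗ
    LinearMap.pi fun s => lf (mu n (ee n s))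

lemma phi_monomial_one (n : ℕ) (f : SS) (s) : phi n f (monomial s 1) = lf (mu n (ee n s)) f := by
  have := (basisMonomials (Fin n ⊕ Fin n) ℂ).constr_basis ℂ (fun s => lf (mu n (ee n s)) f) s
  rw [coe_basisMonomials] at this
  exact this

lemma phi_monomial (n : ℕ) (f : SS) (s) (c : ℂ) :
    phi n f (monomial s c) = c * lf (mu n (ee n s)) f := by
  rw [← phi_monomial_one, ← smul_eq_mul, ← map_smul, smul_monomial, smul_eq_mul, mul_one]

lemma phi_mul_mon (n : ℕ) (f : SS) (s) (i : Fin n) (q : ℕ × ℕ) (c : ℂ) :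
    phi n f (monomial s c * mon n i q) =
      c * lf (∑ j ∈ Finset.univ.erase i, Finsupp.single (ee n s j) 1 +
        Finsupp.single (ee n s i + q) 1) f := by
  rw [mon, X_pow_eq_monomial, X_pow_eq_monomial, monomial_mul, monomial_mul, phi_monomial,
    mul_one, mul_one]
  congr 2
  unfold mu
  rw [← Finset.sum_erase_add _ _ (Finset.mem_univ i)]
  congr 2
  · refine Finset.sum_congr rfl fun j hj => ?_
    have := Finset.ne_of_mem_erase hj
    congr 1
    simp [ee, this.symm]
  · congr 1
    ext <;> simp [ee]

lemma phi_kills (n : ℕ) (f : SS) (hf : ∀ q : ℕ × ℕ, q ≠ 0 → (q.1 + q.2) % 2 = 0 → Ed q f = 0)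
    (Q : RR n) (hQ : Q ∈ diagIdeal n) : phi n f Q = 0 := by
  let J : Ideal (RR n) :=
    { carrier := {Q | ∀ r, phi n f (r * Q) = 0}
      zero_mem' := by intro r; simp
      add_mem' := by
        intro P Q hP hQ r
        rw [mul_add, map_add, hP, hQ, add_zero]
      smul_mem' := by
        intro c Q hQ r
        rw [smul_eq_mul, ← mul_assoc]
        exact hQ _ }
  have hJ : diagIdeal n ≤ J := by
    apply diagIdeal_le_of
    intro q h0 h2 r
    induction r using MvPolynomial.induction_on' with
    | monomial s c =>
      rw [Finset.mul_sum, map_sum]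
      simp only [phi_mul_mon]
      rw [← Finset.mul_sum]
      have := lf_Ed q (ee n s) Finset.univ f
      rw [hf q h0 h2, map_zero] at this
      rw [← this, mul_zero]
    | add p r hp hr => rw [add_mul, map_add, hp, hr, add_zero]
  have := hJ hQ 1
  rwa [one_mul] at this

lemma mu_mapDomain (n : ℕ) (σ : Equiv.Perm (Fin n)) (s) :
    mu n (ee n (s.mapDomain (Sum.map σ σ))) = mu n (ee n s) := by
  unfold mu
  rw [← Equiv.sum_comp σ]
  simp [ee, mapDomain_inl, mapDomain_inr]

/-- odd variables -/
def oddSet : Set (ℕ × ℕ) := {k | (k.1 + k.2) % 2 = 1}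

lemma phi_bAct (n : ℕ) (f : SS) (hf : f ∈ supported ℂ oddSet) (ε σ) (P : RR n) :
    phi n f (bAct n ε σ P) = chi n ε * phi n f P := by
  induction P using MvPolynomial.induction_on' with
  | monomial s c =>
    rw [bAct_monomial, map_smul, phi_monomial, phi_monomial, mu_mapDomain]
    by_cases h0 : coeff (mu n (ee n s)) f = 0
    · simp [lf_apply, h0]
    · rw [smul_eq_mul]
      congr 1
      unfold chi
      refine Finset.prod_congr rfl fun i _ => ?_
      have h1 : ee n s i ∈ oddSet := by
        apply mem_supported.mp hf
        rw [Finset.mem_coe, mem_vars_iff_mem_support]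
        refine ⟨_, mem_support_iff.mpr h0, ?_⟩
        rw [Finsupp.mem_support_iff, mu, Finsupp.finsetSum_apply]
        intro h
        rw [Finset.sum_eq_zero_iff] at h
        have := h i (Finset.mem_univ i)
        simp at this
      have h2 : Odd (s (Sum.inl i) + s (Sum.inr i)) := Nat.odd_iff.mpr h1
      rcases Int.units_eq_one_or (ε i) with h | h <;> simp [h, h2.neg_one_pow]
  | add p q hp hq => simp only [map_add, hp, hq]; ring

lemma exists_mu (m : ℕ) : ∀ μ : ℕ × ℕ →₀ ℕ, μ.degree = m → ∃ e : Fin m → ℕ × ℕ, mu m e = μ := by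
  induction m with
  | zero =>
    intro μ h
    rw [Finsupp.degree_eq_zero_iff] at h
    exact ⟨fun _ => 0, by simp [mu, h]⟩
  | succ m ih =>
    intro μ h
    have h0 : μ ≠ 0 := by rintro rfl; simp at h
    obtain ⟨k, hk⟩ := Finsupp.ne_iff.mp h0
    have hle : Finsupp.single k 1 ≤ μ := by
      rw [Finsupp.single_le_iff]
      have : μ k ≠ 0 := hk
      omega
    have h1 : Finsupp.single k 1 + (μ - Finsupp.single k 1) = μ := add_tsub_cancel_of_le hle
    obtain ⟨e, he⟩ := ih (μ - Finsupp.single k 1) (by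
      have := congrArg Finsupp.degree h1
      rw [map_add, Finsupp.degree_single] at this
      omega)
    refine ⟨Fin.cons k e, ?_⟩
    rw [mu, Fin.sum_univ_succ]
    simp only [Fin.cons_zero, Fin.cons_succ]
    rw [← h1, ← he]
    rfl

lemma phi_inj (n : ℕ) (f : SS) (hf : f.IsHomogeneous n) (h : phi n f = 0) : f = 0 := by
  ext μ
  rw [coeff_zero]
  by_contra hc
  have hd : μ.degree = n := by
    rw [Finsupp.degree_eq_weight_one]; exact hf hc
  obtain ⟨e, he⟩ := exists_mu n μ hd
  have h1 := phi_monomial_one n f (Finsupp.equivFunOnFinite.symm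
    (Sum.elim (fun i => (e i).1) (fun i => (e i).2)))
  have h2 : ee n (Finsupp.equivFunOnFinite.symm
    (Sum.elim (fun i => (e i).1) (fun i => (e i).2))) = e := by
    ext i <;> simp [ee]
  rw [h, h2, he, lf_apply] at h1
  have h3 := mul_eq_zero.mp h1.symm
  exact h3.elim (ffac_ne_zero μ) hc
/-! ### The family of invariants -/

noncomputable def Z (a b : ℕ) : SS := X (a, b)

noncomputable def g3 : SS :=
  Z 3 0 * Z 0 1 ^ 3 - Z 2 1 * Z 0 1 ^ 2 * Z 1 0 + Z 1 2 * Z 0 1 * Z 1 0 ^ 2 - Z 0 3 * Z 1 0 ^ 3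

noncomputable def u5 : SS :=
  Z 5 0 * Z 0 1 ^ 5 - Z 4 1 * Z 0 1 ^ 4 * Z 1 0 + Z 3 2 * Z 0 1 ^ 3 * Z 1 0 ^ 2
    - Z 2 3 * Z 0 1 ^ 2 * Z 1 0 ^ 3 + Z 1 4 * Z 0 1 * Z 1 0 ^ 4 - Z 0 5 * Z 1 0 ^ 5

noncomputable def gy : SS :=
  Z 0 1 * u5 - g3 * (Z 2 1 * Z 0 1 ^ 2 - 2 * Z 1 2 * Z 0 1 * Z 1 0 + 3 * Z 0 3 * Z 1 0 ^ 2)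

noncomputable def gx : SS :=
  Z 1 0 * u5 - g3 * (3 * Z 3 0 * Z 0 1 ^ 2 - 2 * Z 2 1 * Z 0 1 * Z 1 0 + Z 1 2 * Z 1 0 ^ 2)

/-- good polynomials: killed by all even lowering operators, with odd variables, homogeneous -/
structure Good (f : SS) (d : ℕ) : Prop where
  kill : ∀ q : ℕ × ℕ, q ≠ 0 → (q.1 + q.2) % 2 = 0 → Ed q f = 0
  odd : f ∈ supported ℂ oddSet
  hom : f.IsHomogeneous d

lemma Good.mul {f g : SS} {d e : ℕ} (hf : Good f d) (hg : Good g e) : Good (f * g) (d + e) where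
  kill q h0 h2 := by rw [Derivation.leibniz, hf.kill q h0 h2, hg.kill q h0 h2]; simp
  odd := Subalgebra.mul_mem _ hf.odd hg.odd
  hom := hf.hom.mul hg.hom

lemma Good.pow {f : SS} {d : ℕ} (hf : Good f d) (k : ℕ) : Good (f ^ k) (d * k) where
  kill q h0 h2 := by rw [Derivation.leibniz_pow, hf.kill q h0 h2]; simp
  odd := Subalgebra.pow_mem _ hf.odd k
  hom := hf.hom.pow k

lemma Ed_Z (q : ℕ × ℕ) (a b : ℕ) :
    Ed q (Z a b) = if q.1 ≤ a ∧ q.2 ≤ b then Z (a - q.1) (b - q.2) else 0 := Ed_X q (a, b)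

lemma Ed_two (q : ℕ × ℕ) : Ed q (2 : SS) = 0 := Derivation.map_natCast _ 2
lemma Ed_three (q : ℕ × ℕ) : Ed q (3 : SS) = 0 := Derivation.map_natCast _ 3

lemma q_cases (P : ℕ × ℕ → Prop) (hP : ∀ a b, 6 ≤ a + b → P (a, b))
    (h : P (2, 0) ∧ P (1, 1) ∧ P (0, 2) ∧ P (4, 0) ∧ P (3, 1) ∧ P (2, 2) ∧ P (1, 3) ∧ P (0, 4))
    (q : ℕ × ℕ) (h0 : q ≠ 0) (h2 : (q.1 + q.2) % 2 = 0) : P q := by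
  obtain ⟨a, b⟩ := q
  by_cases h6 : 6 ≤ a + b
  · exact hP a b h6
  · have ha : a < 6 := by omega
    have hb : b < 6 := by omega
    have h00 : ¬ (a = 0 ∧ b = 0) := by rintro ⟨rfl, rfl⟩; exact h0 rfl
    simp only at h2
    interval_cases a <;> interval_cases b <;> first | omega | tauto

lemma Ed_Z_big (a b c d : ℕ) (h : 6 ≤ a + b) (h' : c + d ≤ 5) : Ed (a, b) (Z c d) = 0 := by
  rw [Ed_Z, if_neg]; simp only; omega

lemma good_xi : Good (Z 1 0) 1 where
  kill := by
    apply q_cases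
    · intro a b h; exact Ed_Z_big a b _ _ h (by norm_num)
    · simp [Ed_Z]
  odd := X_mem_supported.mpr (by simp [oddSet])
  hom := isHomogeneous_X _ _

lemma good_eta : Good (Z 0 1) 1 where
  kill := by
    apply q_cases
    · intro a b h; exact Ed_Z_big a b _ _ h (by norm_num)
    · simp [Ed_Z]
  odd := X_mem_supported.mpr (by simp [oddSet])
  hom := isHomogeneous_X _ _

lemma Z_odd {a b : ℕ} (h : (a + b) % 2 = 1) : Z a b ∈ supported ℂ oddSet :=
  X_mem_supported.mpr h

lemma Z_hom (a b : ℕ) : (Z a b).IsHomogeneous 1 := isHomogeneous_X _ _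

lemma Z_hom_pow (a b k : ℕ) : (Z a b ^ k).IsHomogeneous k := isHomogeneous_X_pow _ _

lemma two_hom : (2 : SS).IsHomogeneous 0 := isHomogeneous_C _ 2
lemma three_hom : (3 : SS).IsHomogeneous 0 := isHomogeneous_C _ 3

lemma g3_hom : g3.IsHomogeneous 4 := by
  unfold g3
  refine (((?_ : IsHomogeneous _ _).sub ?_).add ?_).sub ?_
  · exact (Z_hom _ _).mul (Z_hom_pow _ _ _)
  · exact ((Z_hom _ _).mul (Z_hom_pow _ _ _)).mul (Z_hom _ _)
  · exact ((Z_hom _ _).mul (Z_hom _ _)).mul (Z_hom_pow _ _ _)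
  · exact (Z_hom _ _).mul (Z_hom_pow _ _ _)

lemma u5_hom : u5.IsHomogeneous 6 := by
  unfold u5
  refine (((((?_ : IsHomogeneous _ _).sub ?_).add ?_).sub ?_).add ?_).sub ?_
  · exact (Z_hom _ _).mul (Z_hom_pow _ _ _)
  · exact ((Z_hom _ _).mul (Z_hom_pow _ _ _)).mul (Z_hom _ _)
  · exact ((Z_hom _ _).mul (Z_hom_pow _ _ _)).mul (Z_hom_pow _ _ _)
  · exact ((Z_hom _ _).mul (Z_hom_pow _ _ _)).mul (Z_hom_pow _ _ _)
  · exact ((Z_hom _ _).mul (Z_hom _ _)).mul (Z_hom_pow _ _ _)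
  · exact (Z_hom _ _).mul (Z_hom_pow _ _ _)

lemma gy_hom : gy.IsHomogeneous 7 := by
  unfold gy
  refine IsHomogeneous.sub ((Z_hom _ _).mul u5_hom) (g3_hom.mul (n := 3) ?_)
  refine ((?_ : IsHomogeneous _ _).sub ?_).add ?_
  · exact (Z_hom _ _).mul (Z_hom_pow _ _ _)
  · exact ((two_hom.mul (Z_hom _ _)).mul (Z_hom _ _)).mul (Z_hom _ _)
  · exact (three_hom.mul (Z_hom _ _)).mul (Z_hom_pow _ _ _)

lemma gx_hom : gx.IsHomogeneous 7 := by
  unfold gx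
  refine IsHomogeneous.sub ((Z_hom _ _).mul u5_hom) (g3_hom.mul (n := 3) ?_)
  refine ((?_ : IsHomogeneous _ _).sub ?_).add ?_
  · exact (three_hom.mul (Z_hom _ _)).mul (Z_hom_pow _ _ _)
  · exact ((two_hom.mul (Z_hom _ _)).mul (Z_hom _ _)).mul (Z_hom _ _)
  · exact (Z_hom _ _).mul (Z_hom_pow _ _ _)

lemma g3_odd : g3 ∈ supported ℂ oddSet := by
  unfold g3
  have h := @Z_odd
  have z10 : Z 1 0 ∈ supported ℂ oddSet := h (by norm_num)
  have z01 : Z 0 1 ∈ supported ℂ oddSet := h (by norm_num)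
  refine sub_mem (add_mem (sub_mem ?_ ?_) ?_) ?_
  · exact mul_mem (h (by norm_num)) (pow_mem z01 _)
  · exact mul_mem (mul_mem (h (by norm_num)) (pow_mem z01 _)) z10
  · exact mul_mem (mul_mem (h (by norm_num)) z01) (pow_mem z10 _)
  · exact mul_mem (h (by norm_num)) (pow_mem z10 _)

lemma u5_odd : u5 ∈ supported ℂ oddSet := by
  unfold u5
  have h := @Z_odd
  have z10 : Z 1 0 ∈ supported ℂ oddSet := h (by norm_num)
  have z01 : Z 0 1 ∈ supported ℂ oddSet := h (by norm_num)
  refine sub_mem (add_mem (sub_mem (add_mem (sub_mem ?_ ?_) ?_) ?_) ?_) ?_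
  · exact mul_mem (h (by norm_num)) (pow_mem z01 _)
  · exact mul_mem (mul_mem (h (by norm_num)) (pow_mem z01 _)) z10
  · exact mul_mem (mul_mem (h (by norm_num)) (pow_mem z01 _)) (pow_mem z10 _)
  · exact mul_mem (mul_mem (h (by norm_num)) (pow_mem z01 _)) (pow_mem z10 _)
  · exact mul_mem (mul_mem (h (by norm_num)) z01) (pow_mem z10 _)
  · exact mul_mem (h (by norm_num)) (pow_mem z10 _)

lemma two_odd : (2 : SS) ∈ supported ℂ oddSet := Subalgebra.natCast_mem _ 2
lemma three_odd : (3 : SS) ∈ supported ℂ oddSet := Subalgebra.natCast_mem _ 3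

lemma gy_odd : gy ∈ supported ℂ oddSet := by
  unfold gy
  have h := @Z_odd
  have z10 : Z 1 0 ∈ supported ℂ oddSet := h (by norm_num)
  have z01 : Z 0 1 ∈ supported ℂ oddSet := h (by norm_num)
  refine sub_mem (mul_mem z01 u5_odd) (mul_mem g3_odd (add_mem (sub_mem ?_ ?_) ?_))
  · exact mul_mem (h (by norm_num)) (pow_mem z01 _)
  · exact mul_mem (mul_mem (mul_mem two_odd (h (by norm_num))) z01) z10
  · exact mul_mem (mul_mem three_odd (h (by norm_num))) (pow_mem z10 _)

lemma gx_odd : gx ∈ supported ℂ oddSet := by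
  unfold gx
  have h := @Z_odd
  have z10 : Z 1 0 ∈ supported ℂ oddSet := h (by norm_num)
  have z01 : Z 0 1 ∈ supported ℂ oddSet := h (by norm_num)
  refine sub_mem (mul_mem z10 u5_odd) (mul_mem g3_odd (add_mem (sub_mem ?_ ?_) ?_))
  · exact mul_mem (mul_mem three_odd (h (by norm_num))) (pow_mem z01 _)
  · exact mul_mem (mul_mem (mul_mem two_odd (h (by norm_num))) z01) z10
  · exact mul_mem (h (by norm_num)) (pow_mem z10 _)

lemma good_g3 : Good g3 4 where
  kill := by
    apply q_cases
    · intro a b h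
      have z := fun c d => Ed_Z_big a b c d h
      simp [g3, Derivation.leibniz, Derivation.leibniz_pow, z]
    · refine ⟨?_, ?_, ?_, ?_, ?_, ?_, ?_, ?_⟩ <;>
      simp [g3, Derivation.leibniz, Derivation.leibniz_pow, Ed_Z] <;> ring
  odd := g3_odd
  hom := g3_hom

lemma good_gy : Good gy 7 where
  kill := by
    intro q h0 h2
    have h3 := good_g3.kill q h0 h2
    rw [gy, map_sub, Derivation.leibniz, Derivation.leibniz, h3]
    clear h3
    revert q
    apply q_cases
    · intro a b h
      have z := fun c d => Ed_Z_big a b c d h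
      simp [u5, Derivation.leibniz, Derivation.leibniz_pow, z, Ed_two, Ed_three]
    · refine ⟨?_, ?_, ?_, ?_, ?_, ?_, ?_, ?_⟩ <;>
      simp [u5, g3, Derivation.leibniz, Derivation.leibniz_pow, Ed_Z, Ed_two, Ed_three] <;>
      first | ring1 | (right; ring1)
  odd := gy_odd
  hom := gy_hom

lemma good_gx : Good gx 7 where
  kill := by
    intro q h0 h2
    have h3 := good_g3.kill q h0 h2
    rw [gx, map_sub, Derivation.leibniz, Derivation.leibniz, h3]
    clear h3
    revert q
    apply q_cases
    · intro a b h
      have z := fun c d => Ed_Z_big a b c d h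
      simp [u5, Derivation.leibniz, Derivation.leibniz_pow, z, Ed_two, Ed_three]
    · refine ⟨?_, ?_, ?_, ?_, ?_, ?_, ?_, ?_⟩ <;>
      simp [u5, g3, Derivation.leibniz, Derivation.leibniz_pow, Ed_Z, Ed_two, Ed_three] <;>
      first | ring1 | (right; ring1)
  odd := gx_odd
  hom := gx_hom
/-- index set of the family -/
abbrev Ix (m : ℕ) := (Σ j : Fin (m + 1), Fin (4 * (j : ℕ) + 1)) ⊕ (Σ j : Fin (m - 1), Fin (4 * (j : ℕ) + 3))

noncomputable def fam (m : ℕ) : Ix m → SS := Sum.elim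
  (fun p => Z 1 0 ^ (p.2 : ℕ) * Z 0 1 ^ (4 * (p.1 : ℕ) - p.2) * g3 ^ (m - p.1))
  (fun p => if (p.2 : ℕ) ≤ 4 * (p.1 : ℕ) + 1 then
      Z 1 0 ^ (p.2 : ℕ) * Z 0 1 ^ (4 * (p.1 : ℕ) + 1 - p.2) * g3 ^ (m - 2 - p.1) * gy
    else Z 1 0 ^ (4 * (p.1 : ℕ) + 1) * g3 ^ (m - 2 - p.1) * gx)

lemma fam_good (m : ℕ) (i : Ix m) : Good (fam m i) (4 * m) := by
  rcases i with ⟨j, a⟩ | ⟨j, a⟩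
  · have h := ((good_xi.pow (a : ℕ)).mul (good_eta.pow (4 * (j : ℕ) - a))).mul (good_g3.pow (m - j))
    have e : 1 * (a : ℕ) + 1 * (4 * (j : ℕ) - a) + 4 * (m - j) = 4 * m := by
      have := a.2; have := j.2; omega
    rw [e] at h
    exact h
  · simp only [fam, Sum.elim_inr]
    split_ifs with hc
    · have h := (((good_xi.pow (a : ℕ)).mul (good_eta.pow (4 * (j : ℕ) + 1 - a))).mul
        (good_g3.pow (m - 2 - j))).mul good_gy
      have e : 1 * (a : ℕ) + 1 * (4 * (j : ℕ) + 1 - a) + 4 * (m - 2 - j) + 7 = 4 * m := by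
        have := a.2; have := j.2; omega
      rw [e] at h
      exact h
    · have h := ((good_xi.pow (4 * (j : ℕ) + 1)).mul (good_g3.pow (m - 2 - j))).mul good_gx
      have e : 1 * (4 * (j : ℕ) + 1) + 4 * (m - 2 - j) + 7 = 4 * m := by
        have := a.2; have := j.2; omega
      rw [e] at h
      exact h

noncomputable def sp : SS →ₐ[ℂ] MvPolynomial (Fin 3) ℂ :=
  aeval fun k => if k = (1, 0) then X 0 else if k = (0, 1) then 1 else
    if k = (3, 0) then X 1 else if k = (5, 0) then X 2 else 0

lemma sp_Z (a b : ℕ) : sp (Z a b) = if (a, b) = (1, 0) then X 0 else if (a, b) = (0, 1) then 1 else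
    if (a, b) = (3, 0) then X 1 else if (a, b) = (5, 0) then X 2 else 0 := by
  simp only [sp, Z, aeval_X]

lemma sp_g3 : sp g3 = X 1 := by simp [g3, sp_Z]
lemma sp_gy : sp gy = X 2 := by simp [gy, u5, sp_g3, sp_Z]
lemma sp_gx : sp gx = X 0 * X 2 - 3 * X 1 ^ 2 := by
  have h3 : sp 3 = 3 := map_ofNat sp 3
  simp [gx, u5, sp_g3, sp_Z, h3]; ring

noncomputable def ex (a b c : ℕ) : Fin 3 →₀ ℕ :=
  Finsupp.single 0 a + Finsupp.single 1 b + Finsupp.single 2 c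

lemma ex_inj {a b c a' b' c' : ℕ} : ex a b c = ex a' b' c' ↔ a = a' ∧ b = b' ∧ c = c' := by
  constructor
  · intro h
    have h0 := DFunLike.congr_fun h 0
    have h1 := DFunLike.congr_fun h 1
    have h2 := DFunLike.congr_fun h 2
    simp [ex] at h0 h1 h2
    exact ⟨h0, h1, h2⟩
  · rintro ⟨rfl, rfl, rfl⟩; rfl

lemma mono_ex (a b c : ℕ) : (X 0 ^ a * X 1 ^ b * X 2 ^ c : MvPolynomial (Fin 3) ℂ) = monomial (ex a b c) 1 := by
  rw [X_pow_eq_monomial, X_pow_eq_monomial, X_pow_eq_monomial, monomial_mul, monomial_mul]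
  simp [ex]

lemma sp_fam_inl (m : ℕ) (p) : sp (fam m (Sum.inl p)) = monomial (ex p.2 (m - p.1) 0) 1 := by
  rw [← mono_ex]
  simp [fam, sp_g3, sp_Z]

lemma sp_fam_inr (m : ℕ) (p) : ∃ c : ℂ, sp (fam m (Sum.inr p)) = monomial (ex p.2 (m - 2 - p.1) 1) 1
    + c • monomial (ex (4 * (p.1 : ℕ) + 1) (m - 2 - p.1 + 2) 0) 1 := by
  rw [← mono_ex, ← mono_ex]
  simp only [fam, Sum.elim_inr]
  split_ifs with h
  · refine ⟨0, ?_⟩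
    simp [sp_g3, sp_Z, sp_gy]
  · refine ⟨-3, ?_⟩
    have e : (p.2 : ℕ) = 4 * (p.1 : ℕ) + 1 + 1 := by have := p.2.2; omega
    rw [e, smul_eq_C_mul]
    have h3 : (C (-3 : ℂ) : MvPolynomial (Fin 3) ℂ) = -3 := by rw [C_neg]; rfl
    simp only [map_mul, map_pow, sp_g3, sp_Z, sp_gx, h3]
    simp
    ring

lemma fam_indep (m : ℕ) : LinearIndependent ℂ (fam m) := by
  rw [Fintype.linearIndependent_iff]
  intro g hg
  have hs := congrArg sp hg
  rw [map_sum, Fintype.sum_sum_type, map_zero] at hs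
  simp only [map_smul] at hs
  choose c hc using sp_fam_inr m
  simp only [sp_fam_inl, hc] at hs
  have h1 : ∀ p, g (Sum.inr p) = 0 := by
    intro p
    have h := congrArg (coeff (ex p.2 (m - 2 - p.1) 1)) hs
    simp only [coeff_add, coeff_sum, coeff_smul, coeff_monomial, ex_inj, coeff_zero] at h
    rw [Finset.sum_eq_zero (by intros; simp), zero_add, Finset.sum_eq_single p] at h
    · simpa using h
    · intro p' _ hp
      have : ¬ ((p'.2 : ℕ) = p.2 ∧ m - 2 - (p'.1 : ℕ) = m - 2 - p.1 ∧ True) := by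
        rintro ⟨h1, h2, _⟩
        apply hp
        obtain ⟨j, a⟩ := p
        obtain ⟨j', a'⟩ := p'
        have hj : j' = j := by
          apply Fin.ext
          have := j.2; have := j'.2
          simp only at h2
          omega
        subst hj
        congr 1
        exact Fin.ext h1
      rw [if_neg this]
      simp
    · simp
  simp only [h1, zero_smul, Finset.sum_const_zero, add_zero] at hs
  have h0 : ∀ p, g (Sum.inl p) = 0 := by
    intro p
    have h := congrArg (coeff (ex p.2 (m - p.1) 0)) hs
    simp only [coeff_sum, coeff_smul, coeff_monomial, ex_inj, coeff_zero] at h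
    rw [Finset.sum_eq_single p] at h
    · simpa using h
    · intro p' _ hp
      have : ¬ ((p'.2 : ℕ) = p.2 ∧ m - (p'.1 : ℕ) = m - p.1 ∧ True) := by
        rintro ⟨h1, h2, _⟩
        apply hp
        obtain ⟨j, a⟩ := p
        obtain ⟨j', a'⟩ := p'
        have hj : j' = j := by
          apply Fin.ext
          have := j.2; have := j'.2
          simp only at h2
          omega
        subst hj
        congr 1
        exact Fin.ext h1
      rw [if_neg this]
      simp
    · simp
  rintro (p | p)
  · exact h0 p
  · exact h1 p

lemma card_Ix (m : ℕ) (hm : 0 < m) : Fintype.card (Ix m) = 4 * m ^ 2 + 2 := by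
  rw [Fintype.card_sum, Fintype.card_sigma, Fintype.card_sigma]
  simp only [Fintype.card_fin]
  obtain ⟨k, rfl⟩ : ∃ k, m = k + 1 := ⟨m - 1, by omega⟩
  change ∑ j : Fin (k + 1 + 1), (4 * (j : ℕ) + 1) + ∑ j : Fin k, (4 * (j : ℕ) + 3) = _
  rw [Fin.sum_univ_eq_sum_range (fun j => 4 * j + 1), Fin.sum_univ_eq_sum_range (fun j => 4 * j + 3)]
  clear hm
  have h1 : ∀ k, ∑ i ∈ Finset.range k, (4 * i + 1) + k = 2 * k ^ 2 := by
    intro k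
    induction k with
    | zero => simp
    | succ k ih => rw [Finset.sum_range_succ]; linarith
  have h2 : ∀ k, ∑ i ∈ Finset.range k, (4 * i + 3) = 2 * k ^ 2 + k := by
    intro k
    induction k with
    | zero => simp
    | succ k ih => rw [Finset.sum_range_succ]; linarith
  have := h1 (k + 1 + 1); have := h2 k
  nlinarith

lemma phi_fam_indep (m : ℕ) : LinearIndependent ℂ (fun i => phi (4 * m) (fam m i)) := by
  rw [Fintype.linearIndependent_iff]
  intro g hg
  have h1 : phi (4 * m) (∑ i, g i • fam m i) = 0 := by
    rw [map_sum, ← hg]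
    simp only [map_smul]
  have h2 : (∑ i, g i • fam m i).IsHomogeneous (4 * m) := by
    apply IsHomogeneous.sum
    intro i _
    rw [smul_eq_C_mul]
    exact zero_add (4 * m) ▸ (isHomogeneous_C _ (g i)).mul (fam_good m i).hom
  exact Fintype.linearIndependent_iff.mp (fam_indep m) g (phi_inj _ _ h2 h1)
/-! ### Projection onto the `chi`-isotypic part -/

lemma bAct_bAct (n : ℕ) (ε ε' : Fin n → ℤˣ) (σ σ' : Equiv.Perm (Fin n)) (P : RR n) :
    bAct n ε' σ' (bAct n ε σ P) = bAct n (ε * (ε' ∘ σ)) (σ' * σ) P := by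
  have : (bAct n ε' σ').comp (bAct n ε σ) = bAct n (ε * (ε' ∘ σ)) (σ' * σ) := by
    apply MvPolynomial.algHom_ext
    rintro (i | i)
    · rw [AlgHom.comp_apply, bAct_X_inl, map_smul, bAct_X_inl, bAct_X_inl, smul_smul]
      simp
    · rw [AlgHom.comp_apply, bAct_X_inr, map_smul, bAct_X_inr, bAct_X_inr, smul_smul]
      simp
  exact DFunLike.congr_fun this P

lemma chi_mul (n : ℕ) (ε ε' : Fin n → ℤˣ) : chi n (ε * ε') = chi n ε * chi n ε' := by
  simp [chi, Finset.prod_mul_distrib]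

lemma chi_comp (n : ℕ) (ε : Fin n → ℤˣ) (σ : Equiv.Perm (Fin n)) : chi n (ε ∘ σ) = chi n ε := by
  unfold chi
  exact Equiv.prod_comp σ (fun i => ((ε i : ℤ) : ℂ))

lemma chi_sq (n : ℕ) (ε : Fin n → ℤˣ) : chi n ε * chi n ε = 1 := by
  rw [← chi_mul]
  have : ε * ε = 1 := by ext i; simp
  rw [this]; simp [chi]

noncomputable def E0 (n : ℕ) (P : RR n) : RR n :=
  ∑ σ : Equiv.Perm (Fin n), ∑ ε : Fin n → ℤˣ, chi n ε • bAct n ε σ P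

lemma bAct_E0 (n : ℕ) (P : RR n) (ε' σ') : bAct n ε' σ' (E0 n P) = chi n ε' • E0 n P := by
  unfold E0
  rw [map_sum, Finset.smul_sum]
  symm
  rw [← Equiv.sum_comp (Equiv.mulLeft σ')]
  refine Finset.sum_congr rfl fun σ _ => ?_
  rw [map_sum, Finset.smul_sum, ← Equiv.sum_comp (Equiv.mulRight (ε' ∘ σ))]
  refine Finset.sum_congr rfl fun ε _ => ?_
  rw [map_smul, bAct_bAct, smul_smul]
  simp only [Equiv.coe_mulRight, Equiv.coe_mulLeft]
  rw [chi_mul, chi_comp]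
  congr 1
  linear_combination (chi_sq n ε') * (chi n ε)

/-- group order -/
def wcard (n : ℕ) : ℕ := Fintype.card (Equiv.Perm (Fin n)) * Fintype.card (Fin n → ℤˣ)

lemma wcard_ne (n : ℕ) : (wcard n : ℂ) ≠ 0 := by
  rw [Nat.cast_ne_zero, wcard]
  exact Nat.mul_ne_zero Fintype.card_ne_zero Fintype.card_ne_zero

lemma phi_E0 (n : ℕ) (f : SS) (hf : f ∈ supported ℂ oddSet) (P : RR n) :
    phi n f (E0 n P) = wcard n * phi n f P := by
  unfold E0
  simp only [map_sum, map_smul, phi_bAct n f hf, smul_eq_mul]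
  simp only [← mul_assoc, chi_sq, one_mul, Finset.sum_const, Finset.card_univ, nsmul_eq_mul, wcard]
  push_cast
  ring

lemma E0_hom (n d : ℕ) (P : RR n) (hP : P.IsHomogeneous d) : (E0 n P).IsHomogeneous d := by
  unfold E0
  apply IsHomogeneous.sum
  intro σ _
  apply IsHomogeneous.sum
  intro ε _
  rw [smul_eq_C_mul]
  exact zero_add d ▸ (isHomogeneous_C _ (chi n ε)).mul (bAct_isHomogeneous n ε σ hP)

/-! ### Assembly -/

lemma NN_le_map (n : ℕ) (U : Submodule ℂ (RR n)) (hU : ∀ P, ∃ u ∈ U, P - u ∈ diagIdeal n)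
    (hc : ∀ u ∈ U, ∀ d, homogeneousComponent d u ∈ U) (m : ℕ) : NN n m ≤ U.map (TT n) := by
  induction m with
  | zero =>
    unfold NN
    rw [Submodule.span_le]
    rintro _ ⟨s, hs, rfl⟩
    omega
  | succ m ih =>
    unfold NN
    rw [Submodule.span_le]
    rintro _ ⟨s, hs, rfl⟩
    by_cases h : s.degree < m
    · exact ih (tt_mem_NN h)
    · have hd : s.degree = m := by omega
      obtain ⟨u, hu, hPu⟩ := hU (monomial s 1)
      have h1 := ih (diagIdeal_le_J1 n hPu m)
      have h2 : homogeneousComponent m (monomial s 1 : RR n) = monomial s 1 :=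
        homogeneousComponent_eq_self (isHomogeneous_monomial _ hd)
      rw [map_sub, map_sub, h2, TT_monomial_one] at h1
      have h3 : TT n (homogeneousComponent m u) ∈ U.map (TT n) :=
        Submodule.mem_map_of_mem (hc u hu m)
      have := Submodule.add_mem _ h1 h3
      rwa [sub_add_cancel] at this

lemma map_TT_top (n : ℕ) (U : Submodule ℂ (RR n)) (hU : ∀ P, ∃ u ∈ U, P - u ∈ diagIdeal n)
    (hc : ∀ u ∈ U, ∀ d, homogeneousComponent d u ∈ U) : U.map (TT n) = ⊤ := by
  rw [eq_top_iff]
  rintro F -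
  have hF : F = ∑ a, F a • (Pi.single a 1 : LL n) := by
    ext k
    simp [Finset.sum_apply, Pi.single_apply]
  rw [hF]
  refine Submodule.sum_mem _ fun a _ => Submodule.smul_mem _ _ ?_
  obtain ⟨s, c, hc0, hs⟩ := tt_diag n a
  have h1 : tt n s ∈ U.map (TT n) := NN_le_map n U hU hc _ (tt_mem_NN (Nat.lt_succ_self _))
  have h2 := Submodule.smul_mem _ c⁻¹ h1
  rwa [hs, smul_smul, inv_mul_cancel₀ hc0, one_smul] at h2

lemma main_bound (m : ℕ) (hm : 0 < m) :
    (2 * (4 * m) + 1) ^ (4 * m) + (4 * m ^ 2 + 2) ≤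
      Module.finrank ℂ (RR (4 * m) ⧸ diagIdeal (4 * m)) + (4 * m + 1) := by
  classical
  set n := 4 * m with hn
  have := finite_quot n
  let mk : RR n →ₗ[ℂ] RR n ⧸ diagIdeal n := (Ideal.Quotient.mkₐ ℂ (diagIdeal n)).toLinearMap
  have hmk : ∀ P, mk P = 0 ↔ P ∈ diagIdeal n := fun P => Ideal.Quotient.eq_zero_iff_mem
  have hmks : Function.Surjective mk := Ideal.Quotient.mkₐ_surjective ℂ _
  let V1 : RR n → Prop := fun Q => ∀ ε σ, bAct n ε σ Q = chi n ε • Q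
  let V2 : RR n → Prop := fun Q => ∀ i, phi n (fam m i) Q = 0
  let H : Set (RR n) := {Q | (∃ d, Q.IsHomogeneous d) ∧ (V1 Q ∨ V2 Q)}
  have hHhom : ∀ d (P : RR n), P.IsHomogeneous d → P ∈ Submodule.span ℂ H := by
    intro d P hP
    have hE : E0 n P ∈ H := ⟨⟨d, E0_hom n d P hP⟩, Or.inl fun ε σ => bAct_E0 n P ε σ⟩
    have hE2 : P - (wcard n : ℂ)⁻¹ • E0 n P ∈ H := by
      refine ⟨⟨d, hP.sub ?_⟩, Or.inr fun i => ?_⟩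
      · rw [smul_eq_C_mul]
        exact zero_add d ▸ (isHomogeneous_C _ _).mul (E0_hom n d P hP)
      · rw [map_sub, map_smul, phi_E0 n _ (fam_good m i).odd, smul_eq_mul, ← mul_assoc,
          inv_mul_cancel₀ (wcard_ne n), one_mul, sub_self]
    have := Submodule.add_mem _ (Submodule.subset_span hE2)
      (Submodule.smul_mem _ (wcard n : ℂ)⁻¹ (Submodule.subset_span (R := ℂ) hE))
    rwa [sub_add_cancel] at this
  have hHtop : Submodule.span ℂ H = ⊤ := by
    rw [eq_top_iff]
    rintro P -
    rw [← sum_homogeneousComponent P]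
    exact Submodule.sum_mem _ fun d _ => hHhom d _ (homogeneousComponent_isHomogeneous d P)
  obtain ⟨b, hb, hbs, hbi⟩ := exists_linearIndependent ℂ (mk '' H)
  have hbtop : Submodule.span ℂ b = ⊤ := by
    rw [hbs, ← Submodule.map_span, hHtop, Submodule.map_top, LinearMap.range_eq_top]
    exact hmks
  have hbfin : Finite b := hbi.finite
  have : Fintype b := Fintype.ofFinite b
  have hlift : ∀ x : b, ∃ Q, Q ∈ H ∧ mk Q = x := fun x => hb x.2
  choose lift hlH hlmk using hlift
  have hcard : Module.finrank ℂ (RR n ⧸ diagIdeal n) = Fintype.card b := by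
    have := finrank_span_eq_card hbi
    rw [Subtype.range_coe, hbtop, finrank_top] at this
    exact this
  set U : Submodule ℂ (RR n) := Submodule.span ℂ (Set.range lift) with hUdef
  have hU : ∀ P, ∃ u ∈ U, P - u ∈ diagIdeal n := by
    intro P
    have h1 : U.map mk = ⊤ := by
      rw [hUdef, Submodule.map_span, ← Set.range_comp]
      have : mk ∘ lift = Subtype.val := funext hlmk
      rw [this, Subtype.range_coe, hbtop]
    have h2 : mk P ∈ U.map mk := by rw [h1]; trivial
    obtain ⟨u, hu, hup⟩ := h2
    refine ⟨u, hu, ?_⟩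
    rw [← hmk, map_sub, hup, sub_self]
  have hUc : ∀ u ∈ U, ∀ d, homogeneousComponent d u ∈ U := by
    intro u hu d
    have : U ≤ U.comap (homogeneousComponent d) := by
      conv_lhs => rw [hUdef]
      rw [Submodule.span_le]
      rintro _ ⟨x, rfl⟩
      show homogeneousComponent d (lift x) ∈ U
      obtain ⟨⟨e, he⟩, -⟩ := hlH x
      rw [homogeneousComponent_of_mem he]
      split_ifs
      · exact Submodule.subset_span ⟨x, rfl⟩
      · exact U.zero_mem
    exact this hu
  have htop := map_TT_top n U hU hUc
  -- dimension of the target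
  let b1 := {x : b // V1 (lift x)}
  let b2 := {x : b // ¬ V1 (lift x)}
  have hb12 : Fintype.card b = Fintype.card b1 + Fintype.card b2 := by
    rw [← Fintype.card_sum]
    exact (Fintype.card_congr (Equiv.sumCompl (fun x : b => V1 (lift x)))).symm
  have hV2 : ∀ x : b2, V2 (lift x.1) := fun x => (hlH x.1).2.resolve_left x.2
  have hdim : (2 * n + 1) ^ n ≤ (n + 1) + Fintype.card b2 := by
    let W : Submodule ℂ (LL n) := Submodule.span ℂ (Set.range fun x : b2 => TT n (lift x.1))
    have hle : (⊤ : Submodule ℂ (LL n)) ≤ Anti n 0 ⊔ W := by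
      rw [← htop, hUdef, Submodule.map_span, Submodule.span_le]
      rintro _ ⟨_, ⟨x, rfl⟩, rfl⟩
      by_cases hx : V1 (lift x)
      · exact Submodule.mem_sup_left (TT_mem_Anti_zero n _ hx)
      · exact Submodule.mem_sup_right (Submodule.subset_span ⟨⟨x, hx⟩, rfl⟩)
    have h1 := Submodule.finrank_mono hle
    have h2 := Submodule.finrank_add_le_finrank_add_finrank (Anti n 0) W
    have h3 := finrank_Anti_zero n
    have h4 : Module.finrank ℂ W ≤ Fintype.card b2 := finrank_range_le_card _
    have h5 : Module.finrank ℂ (⊤ : Submodule ℂ (LL n)) = (2 * n + 1) ^ n := by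
      rw [finrank_top, Module.finrank_fintype_fun_eq_card]
      simp
    omega
  have hb1 : 4 * m ^ 2 + 2 ≤ Fintype.card b1 := by
    rw [← card_Ix m hm]
    let Φ : (Ix m → ℂ) →ₗ[ℂ] (b1 → ℂ) :=
      { toFun := fun g x => ∑ i, g i * phi n (fam m i) (lift x.1)
        map_add' := by
          intro g h; ext x; simp [add_mul, Finset.sum_add_distrib]
        map_smul' := by
          intro c g; ext x
          simp only [Pi.smul_apply, smul_eq_mul, RingHom.id_apply, mul_assoc, Finset.mul_sum] }
    have hΦ : Function.Injective Φ := by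
      rw [← LinearMap.ker_eq_bot, LinearMap.ker_eq_bot']
      intro g hg
      have hψ : ∑ i, g i • phi n (fam m i) = 0 := by
        set ψ := ∑ i, g i • phi n (fam m i) with hψd
        have hap : ∀ P, ψ P = ∑ i, g i * phi n (fam m i) P := by
          intro P; simp [hψd]
        have hU0 : U ≤ LinearMap.ker ψ := by
          rw [hUdef, Submodule.span_le]
          rintro _ ⟨x, rfl⟩
          show ψ (lift x) = 0
          rw [hap]
          by_cases hx : V1 (lift x)
          · exact congrFun hg ⟨x, hx⟩
          · have := hV2 ⟨x, hx⟩
            exact Finset.sum_eq_zero fun i _ => by rw [this i, mul_zero]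
        refine LinearMap.ext fun P => ?_
        obtain ⟨u, hu, hPu⟩ := hU P
        have h1 : ψ (P - u) = 0 := by
          rw [hap]
          exact Finset.sum_eq_zero fun i _ => by
            rw [phi_kills n _ (fam_good m i).kill _ hPu, mul_zero]
        have h2 : ψ u = 0 := hU0 hu
        rw [map_sub, h2, sub_zero] at h1
        exact h1
      funext i
      exact Fintype.linearIndependent_iff.mp (phi_fam_indep m) g hψ i
    have := LinearMap.finrank_le_finrank_of_injective hΦ
    rwa [Module.finrank_fintype_fun_eq_card, Module.finrank_fintype_fun_eq_card] at this
  rw [hcard]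
  omega
/-- If `n` is a positive integer divisible by 4, then
`dim_ℂ R_W ≥ (2n+1)^n + n(n-4)/4` for the diagonal coinvariant ring of `W(Bₙ)`. -/
theorem dim_diag_coinv_ge_of_four_dvd (n : ℕ) (hn : 0 < n) (h4 : 4 ∣ n) :
    ((2 * n + 1 : ℤ)) ^ n + (n : ℤ) * ((n : ℤ) - 4) / 4 ≤
      (Module.finrank ℂ (MvPolynomial (Fin n ⊕ Fin n) ℂ ⧸ diagIdeal n) : ℤ) := by
  obtain ⟨m, rfl⟩ := h4
  have h := main_bound m (by omega)
  have h' : ((2 * (4 * m : ℕ) + 1 : ℤ)) ^ (4 * m) + (4 * (m : ℤ) ^ 2 + 2) ≤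
      (Module.finrank ℂ (MvPolynomial (Fin (4 * m) ⊕ Fin (4 * m)) ℂ ⧸ diagIdeal (4 * m)) : ℤ) +
        (4 * m + 1) := by exact_mod_cast h
  have e : ((4 * m : ℕ) : ℤ) * (((4 * m : ℕ) : ℤ) - 4) / 4 = (m : ℤ) * (4 * m - 4) := by
    rw [show ((4 * m : ℕ) : ℤ) * (((4 * m : ℕ) : ℤ) - 4) = 4 * ((m : ℤ) * (4 * m - 4)) by
      push_cast; ring]
    exact Int.mul_ediv_cancel_left _ (by norm_num)
  rw [e]
  linarith
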